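/- Let 𝒳={1,…,c}, μ a probability measure on 𝒳 with μ_r>0 for every r, and X₁,…,Xₙ i.i.d. μ. Suppose δ_□(W_{Qₙ},W)→0 for some W∈𝒲 and limsup_{n→∞}‖W_{Qₙ}‖_{qΔ}<∞ for some q>1. Then for every θ∈ℝ, Z_n^{(2)}(θ) := (1/n)log E_{μ^{⊗n}}[e^{nθ·N₂(H,Qₙ,X)}] converges, as n→∞, to sup{ θ·G_{2,W}(f) − ∫₀¹ Σ_{r=1}^c f_r(u) log(f_r(u)/μ_r) du : f∈ℱ_c }. -/

import Mathlib

open MeasureTheory Filter Set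
open scoped ENNReal NNReal

noncomputable section

/-- The uniform probability measure on `[0,1]`. -/
def unif01 : Measure ℝ := volume.restrict (Set.Icc 0 1)

instance : IsProbabilityMeasure unif01 :=
  ⟨by rw [unif01, Measure.restrict_apply_univ, Real.volume_Icc]; norm_num⟩

/-- The `L^r` norm (`r : ℝ≥0∞`) of a kernel, viewed as a function on `[0,1]²`. -/
def kerNorm (W : ℝ → ℝ → ℝ) (r : ℝ≥0∞) : ℝ≥0∞ :=
  eLpNorm (fun z : ℝ × ℝ => W z.1 z.2) r (unif01.prod unif01)

/-- The (strong) cut distance `d_□` between two kernels on `[0,1]²`. -/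
def cutDist (W₁ W₂ : ℝ → ℝ → ℝ) : ℝ :=
  ⨆ S : {S : Set ℝ // MeasurableSet S}, ⨆ T : {T : Set ℝ // MeasurableSet T},
    |∫ x in Set.Icc (0:ℝ) 1 ∩ S.1, ∫ y in Set.Icc (0:ℝ) 1 ∩ T.1, (W₁ x y - W₂ x y)|

/-- A Lebesgue-measure-preserving bijection of `[0,1]`. -/
def MPB (σ : ℝ → ℝ) : Prop :=
  Set.BijOn σ (Set.Icc 0 1) (Set.Icc 0 1) ∧ MeasurePreserving σ unif01 unif01

/-- The weak cut distance `δ_□`. -/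
def weakCutDist (W₁ W₂ : ℝ → ℝ → ℝ) : ℝ :=
  ⨅ σ : {σ : ℝ → ℝ // MPB σ}, cutDist (fun x y => W₁ (σ.1 x) (σ.1 y)) W₂

/-- The step kernel `W_{Q_n}` associated to an `n × n` matrix `Q`:
it equals `Q i j` when `⌈n x⌉ = i, ⌈n y⌉ = j`. -/
def stepKernel (n : ℕ) (Q : Fin n → Fin n → ℝ) : ℝ → ℝ → ℝ := fun x y =>
  ∑ i : Fin n, ∑ j : Fin n,
    if x ∈ Set.Ioc (((i : ℕ) : ℝ)/n) ((((i : ℕ) : ℝ)+1)/n) ∧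
       y ∈ Set.Ioc (((j : ℕ) : ℝ)/n) ((((j : ℕ) : ℝ)+1)/n)
    then Q i j else 0

/-- Product over the edges of `H` (each edge counted once) of `f a b`. -/
def edgeProd {v : ℕ} (G : SimpleGraph (Fin v)) [DecidableRel G.Adj]
    (f : Fin v → Fin v → ℝ) : ℝ :=
  ∏ p ∈ Finset.univ.filter (fun p : Fin v × Fin v => G.Adj p.1 p.2 ∧ p.1 < p.2), f p.1 p.2

/-- The number of edges `|E(H)|`. -/
def edgeCard {v : ℕ} (G : SimpleGraph (Fin v)) [DecidableRel G.Adj] : ℕ :=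
  (Finset.univ.filter (fun p : Fin v × Fin v => G.Adj p.1 p.2 ∧ p.1 < p.2)).card

/-- The inhomogeneous U-statistic `U_n(X)` (sum over distinct indices). -/
def Ustat {X : Type*} {v : ℕ} (G : SimpleGraph (Fin v)) [DecidableRel G.Adj]
    (φ : (Fin v → X) → ℝ) (n : ℕ) (Q : Fin n → Fin n → ℝ) (x : Fin n → X) : ℝ :=
  (∑ i ∈ Finset.univ.filter (fun i : Fin v → Fin n => Function.Injective i),
      φ (x ∘ i) * edgeProd G (fun a b => Q (i a) (i b))) / (n : ℝ) ^ v

/-- The inhomogeneous V-statistic `V_n(X)` (sum over all indices). -/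
def Vstat {X : Type*} {v : ℕ} (G : SimpleGraph (Fin v)) [DecidableRel G.Adj]
    (φ : (Fin v → X) → ℝ) (n : ℕ) (Q : Fin n → Fin n → ℝ) (x : Fin n → X) : ℝ :=
  (∑ i : Fin v → Fin n, φ (x ∘ i) * edgeProd G (fun a b => Q (i a) (i b))) / (n : ℝ) ^ v

open Classical in
/-- Kullback-Leibler divergence `D(ν | ρ) ∈ [0,∞]`. -/
def KLdiv {α : Type*} [MeasurableSpace α] (ν ρ : Measure α) : ℝ≥0∞ :=
  if ν ≪ ρ ∧ Integrable (llr ν ρ) ν then ENNReal.ofReal (∫ a, llr ν ρ a ∂ν) else ⊤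

open Classical in
/-- `ν` itself if it is a probability measure, junk value `0` otherwise. -/
def probOr {α : Type*} [MeasurableSpace α] (ν : Measure α) : Measure α :=
  if IsProbabilityMeasure ν then ν else 0

instance {α : Type*} [MeasurableSpace α] (ν : Measure α) : SigmaFinite (probOr ν) := by
  unfold probOr
  split_ifs with h
  · haveI := h; infer_instance
  · infer_instance

/-- `v`-fold product of a (probability) measure. -/
def piProb {α : Type*} [MeasurableSpace α] (v : ℕ) (ν : Measure α) : Measure (Fin v → α) :=
  Measure.pi fun _ => probOr ν

/-- The functional `T_{W,φ}(ν) = E[φ(B₁,…,B_v) ∏_{(a,b) ∈ E(H)} W(A_a,A_b)]`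
for `(A_a,B_a)` i.i.d. with law `ν`. -/
def TWphi {X : Type*} [MeasurableSpace X] {v : ℕ} (G : SimpleGraph (Fin v))
    [DecidableRel G.Adj] (W : ℝ → ℝ → ℝ) (φ : (Fin v → X) → ℝ)
    (ν : Measure (ℝ × X)) : ℝ :=
  ∫ z : Fin v → ℝ × X,
    φ (fun a => (z a).2) * edgeProd G (fun a b => W (z a).1 (z b).1) ∂(piProb v ν)

/-- Membership in `𝒯ℳ`: probability measures on `[0,1] × 𝒳` whose first marginal
is uniform on `[0,1]`. -/
def inTM {X : Type*} [MeasurableSpace X] (ν : Measure (ℝ × X)) : Prop :=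
  IsProbabilityMeasure ν ∧ ν.map Prod.fst = unif01

/-- The rate function `I₀(t) = inf { D(ν|ρ) : ν ∈ 𝒯ℳ, D(ν|ρ) < ∞, T_{W,φ}(ν) = t }`. -/
def rate0 {X : Type*} [MeasurableSpace X] {v : ℕ} (G : SimpleGraph (Fin v))
    [DecidableRel G.Adj] (W : ℝ → ℝ → ℝ) (φ : (Fin v → X) → ℝ) (μ : Measure X)
    (t : ℝ) : ℝ≥0∞ :=
  ⨅ ν : {ν : Measure (ℝ × X) //
      inTM ν ∧ KLdiv ν (unif01.prod μ) ≠ ⊤ ∧ TWphi G W φ ν = t},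
    KLdiv ν.1 (unif01.prod μ)

/-- Tail assumption (T): `E_μ[e^{λ ψ(X)^p}] < ∞` for all `λ > 0`; for `p = ∞`
it means `ψ` is bounded. -/
def TailCond {X : Type*} [MeasurableSpace X] (μ : Measure X) (ψ : X → ℝ)
    (p : ℝ≥0∞) : Prop :=
  if p = ⊤ then ∃ C : ℝ, ∀ x, ψ x ≤ C
  else ∀ lam : ℝ, 0 < lam →
    ∫⁻ x, ENNReal.ofReal (Real.exp (lam * ψ x ^ p.toReal)) ∂μ < ⊤

/-- A sequence of random elements `T n` defined on probability spaces `(Ω n, P n)`,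
taking values in a topological space `E`, satisfies a large deviation principle at
speed `n` with good rate function `I`. -/
def SatisfiesLDP {E : Type*} [TopologicalSpace E] {Ω : ℕ → Type*}
    [∀ n, MeasurableSpace (Ω n)] (P : ∀ n, Measure (Ω n)) (T : ∀ n, Ω n → E)
    (I : E → ℝ≥0∞) : Prop :=
  (∀ c : ℝ≥0∞, c ≠ ⊤ → IsCompact {x | I x ≤ c}) ∧
  ∀ F : Set E, MeasurableSet[borel E] F →
    (-(⨅ x ∈ interior F, (I x : EReal)) ≤
      Filter.atTop.liminf fun n : ℕ =>
        (((n : ℝ)⁻¹ : ℝ) : EReal) * ENNReal.log (P n {ω | T n ω ∈ F})) ∧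
    (Filter.atTop.limsup (fun n : ℕ =>
        (((n : ℝ)⁻¹ : ℝ) : EReal) * ENNReal.log (P n {ω | T n ω ∈ F})) ≤
      -(⨅ x ∈ closure F, (I x : EReal)))

end
/-- The log-normalizing constant `Z_n(θ) = (1/n) log E_{μ^{⊗n}}[e^{nθ f_n(X)}]`. -/
noncomputable def ZnGen {X : Type*} [MeasurableSpace X] (μ : Measure X)
    [IsProbabilityMeasure μ] (f : ∀ n : ℕ, (Fin n → X) → ℝ) (n : ℕ) (θ : ℝ) : ℝ :=
  (n : ℝ)⁻¹ *
    Real.log (∫ x, Real.exp (n * θ * f n x) ∂(Measure.pi fun _ : Fin n => μ))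

/-- The Gibbs measure `R_{n,θ}` with Hamiltonian `f n`, having density
`exp(nθ f_n(x) − n Z_n(θ))` with respect to `μ^{⊗n}`. -/
noncomputable def GibbsMeasure {X : Type*} [MeasurableSpace X] (μ : Measure X)
    [IsProbabilityMeasure μ] (f : ∀ n : ℕ, (Fin n → X) → ℝ) (n : ℕ) (θ : ℝ) :
    Measure (Fin n → X) :=
  (Measure.pi fun _ : Fin n => μ).withDensity fun x =>
    ENNReal.ofReal (Real.exp (n * θ * f n x - n * ZnGen μ f n θ))

/-- The set `{θ T_{W,φ}(ν) − D(ν|ρ) : ν ∈ 𝒯ℳ, D(ν|ρ) < ∞}` whose supremum is `Z(θ)`. -/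
def Zset {X : Type*} [MeasurableSpace X] {v : ℕ} (G : SimpleGraph (Fin v))
    [DecidableRel G.Adj] (W : ℝ → ℝ → ℝ) (φ : (Fin v → X) → ℝ) (μ : Measure X)
    (θ : ℝ) : Set ℝ :=
  {z : ℝ | ∃ ν : Measure (ℝ × X), inTM ν ∧ KLdiv ν (unif01.prod μ) ≠ ⊤ ∧
    z = θ * TWphi G W φ ν - (KLdiv ν (unif01.prod μ)).toReal}
/-- `φ(x₁,…,x_v) = 1{x₁ = … = x_v}` for monochromatic subgraph counts. -/
def monoPhi (c v : ℕ) : (Fin v → Fin c) → ℝ := fun y =>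
  if ∀ a b : Fin v, y a = y b then 1 else 0

/-- The class `ℱ_c` of measurable `f = (f₁,…,f_c) : [0,1] → [0,1]^c`
with `Σ_r f_r(x) = 1`. -/
def Fc (c : ℕ) : Set (ℝ → Fin c → ℝ) :=
  {f | Measurable f ∧ (∀ u ∈ Set.Icc (0 : ℝ) 1, ∀ r, f u r ∈ Set.Icc (0 : ℝ) 1) ∧
    ∀ u ∈ Set.Icc (0 : ℝ) 1, ∑ r, f u r = 1}

/-- `G_{2,W}(f) = Σ_r ∫_{[0,1]^v} ∏_{(a,b) ∈ E(H)} W(x_a,x_b) ∏_a f_r(x_a) dx`. -/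
noncomputable def G2 {v : ℕ} (c : ℕ) (G : SimpleGraph (Fin v)) [DecidableRel G.Adj]
    (W : ℝ → ℝ → ℝ) (f : ℝ → Fin c → ℝ) : ℝ :=
  ∑ r : Fin c,
    ∫ x : Fin v → ℝ, edgeProd G (fun a b => W (x a) (x b)) * ∏ a, f (x a) r
      ∂(Measure.pi fun _ : Fin v => unif01)

/-- The relative entropy `∫₀¹ Σ_r f_r(u) log (f_r(u)/μ_r) du`. -/
noncomputable def entPotts (c : ℕ) (μ : Measure (Fin c)) (f : ℝ → Fin c → ℝ) : ℝ :=
  ∫ u, (∑ r, f u r * Real.log (f u r / (μ {r}).toReal)) ∂unif01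

/-- The rate function `I₂` for monochromatic subgraph counts. -/
noncomputable def rate2 {v : ℕ} (c : ℕ) (G : SimpleGraph (Fin v)) [DecidableRel G.Adj]
    (W : ℝ → ℝ → ℝ) (μ : Measure (Fin c)) (t : ℝ) : ℝ≥0∞ :=
  ⨅ f : {f : ℝ → Fin c → ℝ // f ∈ Fc c ∧ G2 c G W f = t},
    ENNReal.ofReal (entPotts c μ f.1)
section

lemma holder_lt_D {α ι : Type*} [MeasurableSpace α] (μ : Measure α) [IsProbabilityMeasure μ]
    (D : ℕ) (hD : 1 ≤ D) (E : Finset ι) (hE : E.card ≤ D) (f : ι → α → ℝ≥0∞)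
    (hf : ∀ i, Measurable (f i)) :
    ∫⁻ a, ∏ i ∈ E, f i a ^ ((D:ℝ)⁻¹) ∂μ ≤ ∏ i ∈ E, (∫⁻ a, f i a ∂μ) ^ ((D:ℝ)⁻¹) := by
  have hD0 : (0:ℝ) < D := by exact_mod_cast hD
  have h := ENNReal.lintegral_mul_prod_norm_pow_le (μ := μ) E (g := fun _ => 1)
    (f := f) aemeasurable_const (fun i _ => (hf i).aemeasurable)
    (q := 1 - E.card * (D:ℝ)⁻¹) (p := fun _ => (D:ℝ)⁻¹) (by simp) (by
      have : (E.card : ℝ) ≤ D := by exact_mod_cast hE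
      rw [sub_nonneg, ← div_eq_mul_inv, div_le_one hD0]; exact this) (fun _ _ => by positivity)
  simpa using h

lemma finner {v : ℕ} {ι : Type*} [DecidableEq ι] (μ : Measure ℝ) [IsProbabilityMeasure μ]
    (D : ℕ) (hD : 1 ≤ D) (E : Finset ι) (h : ι → (Fin v → ℝ) → ℝ≥0∞)
    (hm : ∀ j, Measurable (h j)) (dep : ι → Fin v → Prop) [∀ j i, Decidable (dep j i)]
    (hdep : ∀ j i, ¬ dep j i → ∀ x y, h j (Function.update x i y) = h j x)
    (hdeg : ∀ i, (E.filter (fun j => dep j i)).card ≤ D) (s : Finset (Fin v)) (x : Fin v → ℝ) :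
    lmarginal (fun _ => μ) s (fun x => ∏ j ∈ E, h j x ^ ((D:ℝ)⁻¹)) x
      ≤ ∏ j ∈ E, (lmarginal (fun _ => μ) s (h j) x) ^ ((D:ℝ)⁻¹) := by
  have hmp : Measurable (fun x => ∏ j ∈ E, h j x ^ ((D:ℝ)⁻¹)) :=
    Finset.measurable_prod _ (fun j _ => (hm j).pow_const _)
  induction s using Finset.induction generalizing x with
  | empty => simp
  | insert i s hi ih =>
    rw [lmarginal_insert _ hmp hi]
    have hnd : ∀ j, ¬ dep j i → ∀ y, lmarginal (fun _ => μ) s (h j) (Function.update x i y)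
        = lmarginal (fun _ => μ) s (h j) x := by
      intro j hj y
      rw [lmarginal_update_of_notMem (hm j) hi]
      congr 1
      funext z
      exact hdep j i hj z y
    have hmm : ∀ j, Measurable fun y => lmarginal (fun _ => μ) s (h j) (Function.update x i y) :=
      fun j => ((hm j).lmarginal (fun _ => μ)).comp (measurable_update x)
    calc _ ≤ ∫⁻ y, ∏ j ∈ E, (lmarginal (fun _ => μ) s (h j) (Function.update x i y)) ^ ((D:ℝ)⁻¹) ∂μ :=
          lintegral_mono (fun y => ih _)
      _ = ∫⁻ y, (∏ j ∈ E.filter (fun j => ¬ dep j i), (lmarginal (fun _ => μ) s (h j) x) ^ ((D:ℝ)⁻¹)) *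
            ∏ j ∈ E.filter (fun j => dep j i),
              (lmarginal (fun _ => μ) s (h j) (Function.update x i y)) ^ ((D:ℝ)⁻¹) ∂μ := by
          congr 1; funext y
          rw [← Finset.prod_filter_mul_prod_filter_not E (fun j => dep j i), mul_comm]
          congr 1
          apply Finset.prod_congr rfl
          intro j hj
          rw [hnd j (Finset.mem_filter.mp hj).2]
      _ = (∏ j ∈ E.filter (fun j => ¬ dep j i), (lmarginal (fun _ => μ) s (h j) x) ^ ((D:ℝ)⁻¹)) *
            ∫⁻ y, ∏ j ∈ E.filter (fun j => dep j i),
              (lmarginal (fun _ => μ) s (h j) (Function.update x i y)) ^ ((D:ℝ)⁻¹) ∂μ := by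
          rw [lintegral_const_mul]
          exact Finset.measurable_prod _ (fun j _ => (hmm j).pow_const _)
      _ ≤ (∏ j ∈ E.filter (fun j => ¬ dep j i), (lmarginal (fun _ => μ) s (h j) x) ^ ((D:ℝ)⁻¹)) *
            ∏ j ∈ E.filter (fun j => dep j i),
              (∫⁻ y, lmarginal (fun _ => μ) s (h j) (Function.update x i y) ∂μ) ^ ((D:ℝ)⁻¹) := by
          gcongr
          exact holder_lt_D μ D hD _ (hdeg i) _ hmm
      _ = _ := by
          rw [← Finset.prod_filter_mul_prod_filter_not E (fun j => dep j i), mul_comm]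
          congr 1
          · apply Finset.prod_congr rfl
            intro j hj
            rw [lmarginal_insert _ (hm j) hi]
          · apply Finset.prod_congr rfl
            intro j hj
            rw [lmarginal_insert _ (hm j) hi]
            simp [hnd j (Finset.mem_filter.mp hj).2]

lemma map_pair {v : ℕ} (μ : Measure ℝ) [IsProbabilityMeasure μ] (a b : Fin v) (hab : a ≠ b) :
    (Measure.pi fun _ : Fin v => μ).map (fun x => (x a, x b)) = μ.prod μ := by
  have h := ProbabilityTheory.iIndepFun_pi (ι := Fin v) (μ := fun _ => μ)
    (X := fun _ x => x) (fun i => aemeasurable_id)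
  have h2 := h.indepFun hab
  rw [ProbabilityTheory.indepFun_iff_map_prod_eq_prod_map_map
    (measurable_pi_apply a).aemeasurable (measurable_pi_apply b).aemeasurable] at h2
  rw [h2, (measurePreserving_eval (fun _ : Fin v => μ) a).map_eq,
    (measurePreserving_eval (fun _ : Fin v => μ) b).map_eq]

/-- edges of `G` as ordered pairs -/
abbrev edg {v : ℕ} (G : SimpleGraph (Fin v)) [DecidableRel G.Adj] : Finset (Fin v × Fin v) :=
  Finset.univ.filter (fun p : Fin v × Fin v => G.Adj p.1 p.2 ∧ p.1 < p.2)

lemma edg_deg {v : ℕ} (G : SimpleGraph (Fin v)) [DecidableRel G.Adj] (i : Fin v) :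
    ((edg G).filter (fun p => p.1 = i ∨ p.2 = i)).card ≤ G.maxDegree := by
  refine le_trans ?_ (G.degree_le_maxDegree i)
  rw [← SimpleGraph.card_neighborFinset_eq_degree]
  apply Finset.card_le_card_of_injOn (fun p => if p.1 = i then p.2 else p.1)
  · intro p hp
    simp only [Finset.coe_filter, Finset.mem_filter, Finset.mem_univ, true_and, Set.mem_setOf_eq] at hp
    obtain ⟨⟨h1, h2⟩, h3⟩ := hp
    simp only [Finset.mem_coe, SimpleGraph.mem_neighborFinset]
    split_ifs with h
    · rw [← h]; exact h1
    · rcases h3 with h3 | h3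
      · exact absurd h3 h
      · rw [← h3]; exact h1.symm
  · rintro ⟨a, b⟩ hp ⟨a', b'⟩ hp' h
    simp only [Finset.coe_filter, Finset.mem_filter, Finset.mem_univ, true_and, Set.mem_setOf_eq] at hp hp'
    dsimp only at h
    split_ifs at h <;> grind

lemma edge_finner {v : ℕ} (G : SimpleGraph (Fin v)) [DecidableRel G.Adj]
    (D : ℕ) (hD : 1 ≤ D) (hG : G.maxDegree ≤ D) (N : ℝ × ℝ → ℝ≥0∞) (hN : Measurable N) :
    ∫⁻ x, ∏ p ∈ edg G, N (x p.1, x p.2) ∂(Measure.pi fun _ : Fin v => unif01)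
      ≤ ((∫⁻ z, N z ^ (D:ℝ) ∂(unif01.prod unif01)) ^ ((D:ℝ)⁻¹)) ^ (edg G).card := by
  have hD0 : (0:ℝ) < D := by exact_mod_cast hD
  have hm : ∀ p : Fin v × Fin v, Measurable fun x : Fin v → ℝ => N (x p.1, x p.2) ^ (D:ℝ) := by
    intro p
    exact (hN.comp ((measurable_pi_apply _).prodMk (measurable_pi_apply _))).pow_const _
  have h := finner unif01 D hD (edg G) (fun p x => N (x p.1, x p.2) ^ (D:ℝ)) hm
    (fun p i => p.1 = i ∨ p.2 = i) (by
      intro p i hp x y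
      push Not at hp
      simp [Function.update_of_ne hp.1, Function.update_of_ne hp.2])
    (fun i => (edg_deg G i).trans hG) Finset.univ (fun _ => 0)
  simp only [lmarginal_univ] at h
  simp only [← ENNReal.rpow_mul, mul_inv_cancel₀ hD0.ne', ENNReal.rpow_one] at h
  refine h.trans ?_
  rw [Finset.prod_congr rfl (g := fun _ => (∫⁻ z, N z ^ (D:ℝ) ∂(unif01.prod unif01)) ^ ((D:ℝ)⁻¹))]
  · simp
  · intro p hp
    have hne : p.1 ≠ p.2 := by
      simp only [Finset.mem_filter] at hp
      exact hp.2.2.ne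
    rw [← map_pair unif01 p.1 p.2 hne, lintegral_map (hN.pow_const _)]
    exact (measurable_pi_apply _).prodMk (measurable_pi_apply _)

end

section

/-- cut-norm bound -/
def CutLe (D : ℝ × ℝ → ℝ) (η : ℝ) : Prop :=
  ∀ S T : Set ℝ, MeasurableSet S → MeasurableSet T →
    |∫ z in S ×ˢ T, D z ∂(unif01.prod unif01)| ≤ η

lemma bl_one (μ : Measure ℝ) [IsProbabilityMeasure μ] (F : ℝ × ℝ → ℝ)
    (hFi : Integrable F (μ.prod μ)) (B : ℝ → ℝ) (hB : Measurable B)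
    (h0 : ∀ x, 0 ≤ B x) (h1 : ∀ x, B x ≤ 1) :
    ∃ S, MeasurableSet S ∧ ∫ z, F z * B z.1 ∂(μ.prod μ)
      ≤ ∫ z, F z * S.indicator (fun _ => (1:ℝ)) z.1 ∂(μ.prod μ) := by
  obtain ⟨g, hgm, hg⟩ := hFi.integral_prod_left.aestronglyMeasurable
  have hgi : Integrable g μ := hFi.integral_prod_left.congr hg
  refine ⟨{x | 0 ≤ g x}, measurableSet_le measurable_const hgm.measurable, ?_⟩
  have key : ∀ C : ℝ → ℝ, Measurable C → (∀ x, 0 ≤ C x) → (∀ x, C x ≤ 1) →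
      ∫ z, F z * C z.1 ∂(μ.prod μ) = ∫ x, g x * C x ∂μ ∧ Integrable (fun x => g x * C x) μ := by
    intro C hC h0 h1
    have hi : Integrable (fun z => F z * C z.1) (μ.prod μ) :=
      hFi.mul_bdd (c := 1) (hC.comp measurable_fst).aestronglyMeasurable
        (Eventually.of_forall fun z => by
          rw [Real.norm_eq_abs, abs_le]; exact ⟨by linarith [h0 z.1], h1 _⟩)
    constructor
    · rw [integral_prod _ hi]
      apply integral_congr_ae
      filter_upwards [hg] with x hx
      simp only [integral_mul_const, hx]
    · exact hgi.mul_bdd (c := 1) hC.aestronglyMeasurable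
        (Eventually.of_forall fun z => by
          rw [Real.norm_eq_abs, abs_le]; exact ⟨by linarith [h0 z], h1 _⟩)
  have hind : Measurable ({x | 0 ≤ g x}.indicator (fun _ => (1:ℝ))) :=
    measurable_const.indicator (measurableSet_le measurable_const hgm.measurable)
  have k1 := key B hB h0 h1
  have k2 := key _ hind (fun x => Set.indicator_nonneg (fun _ _ => zero_le_one) x)
    (fun x => Set.indicator_le_self' (fun _ _ => zero_le_one) x)
  rw [k1.1, k2.1]
  apply integral_mono k1.2 k2.2
  intro x
  by_cases hx : 0 ≤ g x
  · have : x ∈ {x | 0 ≤ g x} := hx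
    simp only [Set.indicator_of_mem this]
    nlinarith [h1 x]
  · have : x ∉ {x | 0 ≤ g x} := hx
    simp only [Set.indicator_of_notMem this]
    push Not at hx
    nlinarith [h0 x]

lemma bl_two (μ : Measure ℝ) [IsProbabilityMeasure μ] (F : ℝ × ℝ → ℝ)
    (hFi : Integrable F (μ.prod μ)) (B : ℝ → ℝ) (hB : Measurable B)
    (h0 : ∀ x, 0 ≤ B x) (h1 : ∀ x, B x ≤ 1) :
    ∃ S, MeasurableSet S ∧ ∫ z, F z * B z.2 ∂(μ.prod μ)
      ≤ ∫ z, F z * S.indicator (fun _ => (1:ℝ)) z.2 ∂(μ.prod μ) := by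
  obtain ⟨S, hS, h⟩ := bl_one μ (F ∘ Prod.swap) hFi.swap B hB h0 h1
  refine ⟨S, hS, ?_⟩
  rw [← integral_prod_swap, ← integral_prod_swap (fun z : ℝ × ℝ => F z * S.indicator (fun _ => (1:ℝ)) z.2)]
  exact h

lemma bl_pos (D : ℝ × ℝ → ℝ) (hD : Integrable D (unif01.prod unif01)) (η : ℝ) (hc : CutLe D η)
    (B C : ℝ → ℝ) (hB : Measurable B) (h0 : ∀ x, 0 ≤ B x) (h1 : ∀ x, B x ≤ 1)
    (hC : Measurable C) (h0' : ∀ x, 0 ≤ C x) (h1' : ∀ x, C x ≤ 1) :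
    ∫ z, D z * B z.1 * C z.2 ∂(unif01.prod unif01) ≤ η := by
  have bd : ∀ B : ℝ → ℝ, Measurable B → (∀ x, 0 ≤ B x) → (∀ x, B x ≤ 1) →
      Integrable (fun z => D z * B z.1) (unif01.prod unif01) := by
    intro C hC h0 h1
    exact hD.mul_bdd (c := 1) (hC.comp measurable_fst).aestronglyMeasurable
        (Eventually.of_forall fun z => by
          rw [Real.norm_eq_abs, abs_le]; exact ⟨by linarith [h0 z.1], h1 _⟩)
  obtain ⟨T, hT, h2⟩ := bl_two unif01 _ (bd B hB h0 h1) C hC h0' h1'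
  have hDT : Integrable (fun z => D z * T.indicator (fun _ => (1:ℝ)) z.2) (unif01.prod unif01) :=
    hD.mul_bdd (c := 1) ((measurable_const.indicator hT).comp measurable_snd).aestronglyMeasurable
        (Eventually.of_forall fun z => by
          by_cases h : z.2 ∈ T <;> simp [h])
  obtain ⟨S, hS, h3⟩ := bl_one unif01 _ hDT B hB h0 h1
  refine h2.trans ?_
  have e1 : ∀ z : ℝ × ℝ, D z * B z.1 * T.indicator (fun _ => (1:ℝ)) z.2
    = D z * T.indicator (fun _ => (1:ℝ)) z.2 * B z.1 := fun z => by ring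
  simp_rw [e1]
  refine h3.trans ?_
  have e2 : ∀ z : ℝ × ℝ, D z * T.indicator (fun _ => (1:ℝ)) z.2 * S.indicator (fun _ => (1:ℝ)) z.1
    = (S ×ˢ T).indicator D z := by
    intro z
    by_cases hs : z.1 ∈ S <;> by_cases ht : z.2 ∈ T <;> simp [hs, ht, Set.indicator, Set.mem_prod]
  simp_rw [e2]
  rw [integral_indicator (hS.prod hT)]
  exact (le_abs_self _).trans (hc S T hS hT)

lemma bl_abs (D : ℝ × ℝ → ℝ) (hD : Integrable D (unif01.prod unif01)) (η : ℝ) (hc : CutLe D η)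
    (B C : ℝ → ℝ) (hB : Measurable B) (h0 : ∀ x, 0 ≤ B x) (h1 : ∀ x, B x ≤ 1)
    (hC : Measurable C) (h0' : ∀ x, 0 ≤ C x) (h1' : ∀ x, C x ≤ 1) :
    |∫ z, D z * B z.1 * C z.2 ∂(unif01.prod unif01)| ≤ η := by
  rw [abs_le']
  refine ⟨bl_pos D hD η hc B C hB h0 h1 hC h0' h1', ?_⟩
  have := bl_pos (-D) hD.neg η (by
    intro S T hS hT
    have := hc S T hS hT
    simp only [Pi.neg_apply, integral_neg, abs_neg]; exact this) B C hB h0 h1 hC h0' h1'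
  simpa [integral_neg] using this

lemma bl_signed (D : ℝ × ℝ → ℝ) (hD : Integrable D (unif01.prod unif01)) (η : ℝ) (hc : CutLe D η)
    (B C : ℝ → ℝ) (hB : Measurable B) (h1 : ∀ x, |B x| ≤ 1)
    (hC : Measurable C) (h1' : ∀ x, |C x| ≤ 1) :
    |∫ z, D z * B z.1 * C z.2 ∂(unif01.prod unif01)| ≤ 4 * η := by
  have hp : ∀ B : ℝ → ℝ, Measurable B → (∀ x, |B x| ≤ 1) →
    Measurable (fun x => max (B x) 0) ∧ (∀ x, 0 ≤ max (B x) 0) ∧ (∀ x, max (B x) 0 ≤ 1) :=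
    fun B hB h => ⟨hB.max measurable_const, fun x => le_max_right _ _,
      fun x => max_le ((le_abs_self _).trans (h x)) zero_le_one⟩
  have pB := hp B hB h1
  have nB := hp (fun x => - B x) hB.neg (fun x => by rw [abs_neg]; exact h1 x)
  have pC := hp C hC h1'
  have nC := hp (fun x => - C x) hC.neg (fun x => by rw [abs_neg]; exact h1' x)
  have int : ∀ B C : ℝ → ℝ, (Measurable B ∧ (∀ x, 0 ≤ B x) ∧ (∀ x, B x ≤ 1)) →
      (Measurable C ∧ (∀ x, 0 ≤ C x) ∧ (∀ x, C x ≤ 1)) →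
      Integrable (fun z => D z * B z.1 * C z.2) (unif01.prod unif01) := by
    intro B C hB hC
    refine (hD.mul_bdd (c := 1) (hB.1.comp measurable_fst).aestronglyMeasurable ?_).mul_bdd (c := 1)
      (hC.1.comp measurable_snd).aestronglyMeasurable ?_
    · exact (Eventually.of_forall fun z => by
          change |B z.1| ≤ 1; rw [abs_le]; exact ⟨by linarith [hB.2.1 z.1], hB.2.2 _⟩)
    · exact (Eventually.of_forall fun z => by
          change |C z.2| ≤ 1; rw [abs_le]; exact ⟨by linarith [hC.2.1 z.2], hC.2.2 _⟩)
  have e : ∀ z : ℝ × ℝ, D z * B z.1 * C z.2 =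
      (D z * max (B z.1) 0 * max (C z.2) 0 - D z * max (B z.1) 0 * max (- C z.2) 0) -
      (D z * max (-B z.1) 0 * max (C z.2) 0 - D z * max (-B z.1) 0 * max (- C z.2) 0) := by
    intro z
    have hx : ∀ x : ℝ, x = max x 0 - max (-x) 0 := by
      intro x; rcases le_total 0 x with h | h
      · rw [max_eq_left h, max_eq_right (by linarith)]; ring
      · rw [max_eq_right h, max_eq_left (by linarith)]; ring
    conv_lhs => rw [hx (B z.1), hx (C z.2)]
    ring
  simp_rw [e]
  rw [integral_sub (by exact (int _ _ pB pC).sub (int _ _ pB nC)) (by exact (int _ _ nB pC).sub (int _ _ nB nC)),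
    integral_sub (int _ _ pB pC) (int _ _ pB nC), integral_sub (int _ _ nB pC) (int _ _ nB nC)]
  have a1 := bl_abs D hD η hc _ _ pB.1 pB.2.1 pB.2.2 pC.1 pC.2.1 pC.2.2
  have a2 := bl_abs D hD η hc _ _ pB.1 pB.2.1 pB.2.2 nC.1 nC.2.1 nC.2.2
  have a3 := bl_abs D hD η hc _ _ nB.1 nB.2.1 nB.2.2 pC.1 pC.2.1 pC.2.2
  have a4 := bl_abs D hD η hc _ _ nB.1 nB.2.1 nB.2.2 nC.1 nC.2.1 nC.2.2
  rw [abs_le] at *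
  constructor <;> linarith

lemma bl_scaled (D : ℝ × ℝ → ℝ) (hD : Integrable D (unif01.prod unif01)) (η : ℝ) (hc : CutLe D η)
    (B C : ℝ → ℝ) (K L : ℝ) (hK : 0 < K) (hL : 0 < L) (hB : Measurable B) (h1 : ∀ x, |B x| ≤ K)
    (hC : Measurable C) (h1' : ∀ x, |C x| ≤ L) :
    |∫ z, D z * B z.1 * C z.2 ∂(unif01.prod unif01)| ≤ K * L * (4 * η) := by
  have := bl_signed D hD η hc (fun x => B x / K) (fun x => C x / L) (hB.div_const _)
    (fun x => by rw [abs_div, abs_of_pos hK, div_le_one hK]; exact h1 x) (hC.div_const _)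
    (fun x => by rw [abs_div, abs_of_pos hL, div_le_one hL]; exact h1' x)
  have e : ∀ z : ℝ × ℝ, D z * B z.1 * C z.2 = (K * L) * (D z * (B z.1 / K) * (C z.2 / L)) := by
    intro z; field_simp
  simp_rw [e]
  rw [integral_const_mul, abs_mul, abs_of_pos (mul_pos hK hL)]
  gcongr

lemma mp_update {v : ℕ} (μ : Measure ℝ) [IsProbabilityMeasure μ] (a : Fin v) :
    MeasurePreserving (fun p : (Fin v → ℝ) × ℝ => Function.update p.1 a p.2)
      ((Measure.pi fun _ : Fin v => μ).prod μ) (Measure.pi fun _ : Fin v => μ) := by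
  have hm : Measurable (fun p : (Fin v → ℝ) × ℝ => Function.update p.1 a p.2) := by
    rw [measurable_pi_iff]
    intro i
    by_cases h : i = a
    · subst h; simpa using measurable_snd
    · simp only [Function.update_of_ne h]
      exact (measurable_pi_apply i).comp measurable_fst
  refine ⟨hm, ?_⟩
  symm
  apply Measure.pi_eq
  intro S hS
  rw [Measure.map_apply hm (MeasurableSet.univ_pi hS)]
  have : (fun p : (Fin v → ℝ) × ℝ => Function.update p.1 a p.2) ⁻¹' (Set.univ.pi S)
      = (Set.univ.pi (Function.update S a Set.univ)) ×ˢ (S a) := by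
    ext ⟨y, s⟩
    simp only [Set.mem_preimage, Set.mem_pi, Set.mem_univ, true_implies, Set.mem_prod]
    constructor
    · intro h
      refine ⟨fun i => ?_, by simpa using h a⟩
      by_cases hi : i = a
      · subst hi; simp
      · have := h i; simpa [Function.update_of_ne hi] using this
    · rintro ⟨h, h'⟩ i
      by_cases hi : i = a
      · subst hi; simpa using h'
      · have := h i; simpa [Function.update_of_ne hi] using this
  rw [this, Measure.prod_prod, Measure.pi_pi, mul_comm,
    ← Finset.mul_prod_erase Finset.univ (fun i => μ (S i)) (Finset.mem_univ a),
    ← Finset.mul_prod_erase Finset.univ (fun i => μ (Function.update S a univ i)) (Finset.mem_univ a)]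
  simp only [Function.update_self, measure_univ, one_mul]
  congr 1
  apply Finset.prod_congr rfl
  intro i hi
  rw [Function.update_of_ne (Finset.ne_of_mem_erase hi)]

lemma mp_update2 {v : ℕ} (μ : Measure ℝ) [IsProbabilityMeasure μ] (a b : Fin v) :
    MeasurePreserving (fun p : (Fin v → ℝ) × (ℝ × ℝ) =>
        Function.update (Function.update p.1 a p.2.1) b p.2.2)
      ((Measure.pi fun _ : Fin v => μ).prod (μ.prod μ)) (Measure.pi fun _ : Fin v => μ) := by
  have h1 := (mp_update (v := v) μ a).prod (MeasurePreserving.id μ)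
  have h2 := (mp_update (v := v) μ b).comp h1
  have h3 := h2.comp ((measurePreserving_prodAssoc (Measure.pi fun _ : Fin v => μ) μ μ).symm)
  exact h3

lemma resample_bound {v : ℕ} (a b : Fin v) (hab : a ≠ b) (D : ℝ × ℝ → ℝ)
    (hD : Integrable D (unif01.prod unif01)) (η : ℝ) (hc : CutLe D η)
    (P R : (Fin v → ℝ) → ℝ) (hP : Measurable P) (hR : Measurable R) (K L : ℝ) (hK : 0 < K) (hL : 0 < L)
    (hPK : ∀ x, |P x| ≤ K) (hRL : ∀ x, |R x| ≤ L)
    (hPd : ∀ x t, P (Function.update x b t) = P x) (hRd : ∀ x t, R (Function.update x a t) = R x) :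
    |∫ x, D (x a, x b) * (P x * R x) ∂(Measure.pi fun _ : Fin v => unif01)| ≤ K * L * (4 * η) := by
  have hT := mp_update2 (v := v) unif01 a b
  have hDi : Integrable (fun x : Fin v → ℝ => D (x a, x b)) (Measure.pi fun _ : Fin v => unif01) := by
    have h := map_pair (v := v) unif01 a b hab
    rw [← h] at hD
    exact hD.comp_measurable ((measurable_pi_apply a).prodMk (measurable_pi_apply b))
  have hI : Integrable (fun x : Fin v → ℝ => D (x a, x b) * (P x * R x))
      (Measure.pi fun _ : Fin v => unif01) := by
    refine hDi.mul_bdd (c := K * L) (hP.mul hR).aestronglyMeasurable (Eventually.of_forall fun x => ?_)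
    rw [Real.norm_eq_abs, abs_mul]
    exact mul_le_mul (hPK x) (hRL x) (abs_nonneg _) hK.le
  rw [← hT.map_eq] at hI ⊢
  rw [integral_map hT.measurable.aemeasurable hI.aestronglyMeasurable]
  have hI2 := hI.comp_measurable hT.measurable
  simp only [Function.comp_def] at hI2
  rw [integral_prod _ hI2]
  rw [← Real.norm_eq_abs]
  refine (norm_integral_le_of_norm_le_const (C := K * L * (4 * η)) (Eventually.of_forall fun y => ?_)).trans (by simp)
  rw [Real.norm_eq_abs]
  have := bl_scaled D hD η hc (fun s => P (Function.update y a s)) (fun t => R (Function.update y b t))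
    K L hK hL (hP.comp (measurable_update y)) (fun x => hPK _) (hR.comp (measurable_update y))
    (fun x => hRL _)
  convert this using 3
  ext z
  have e1 : Function.update (Function.update y a z.1) b z.2 a = z.1 := by
    rw [Function.update_of_ne hab]; simp
  rw [e1, Function.update_self, hPd, Function.update_comm hab, hRd]
  simp [mul_assoc]

end

section

/-- homomorphism density with vertex weight -/
noncomputable def tH {v : ℕ} (G : SimpleGraph (Fin v)) [DecidableRel G.Adj]
    (U : ℝ → ℝ → ℝ) (h : ℝ → ℝ) : ℝ :=
  ∫ x : Fin v → ℝ, edgeProd G (fun a b => U (x a) (x b)) * ∏ a, h (x a)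
      ∂(Measure.pi fun _ : Fin v => unif01)

lemma meas_pair {v : ℕ} (a b : Fin v) : Measurable fun x : Fin v → ℝ => (x a, x b) :=
  (measurable_pi_apply a).prodMk (measurable_pi_apply b)

/-- single-edge replacement bound -/
lemma single_step {v : ℕ} (G : SimpleGraph (Fin v)) [DecidableRel G.Adj] (q : ℝ) (hq : 1 < q)
    (M : ℝ × ℝ → ℝ) (hM : Measurable M) (hM1 : ∀ z, 1 ≤ M z) (A : ℝ)
    (hinteg : Integrable (fun x : Fin v → ℝ => (∏ p ∈ edg G, M (x p.1, x p.2)) ^ q)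
      (Measure.pi fun _ : Fin v => unif01))
    (hA : ∫ x : Fin v → ℝ, (∏ p ∈ edg G, M (x p.1, x p.2)) ^ q
      ∂(Measure.pi fun _ : Fin v => unif01) ≤ A)
    (e : Fin v × Fin v) (he : e ∈ edg G) (D : ℝ × ℝ → ℝ) (hDm : Measurable D)
    (hD : Integrable D (unif01.prod unif01)) (hDM : ∀ z, |D z| ≤ M z) (η : ℝ) (hc : CutLe D η)
    (R : (Fin v × Fin v) → ℝ × ℝ → ℝ) (hR : ∀ p, Measurable (R p)) (hRM : ∀ p z, |R p z| ≤ M z)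
    (K : ℝ) (hK : 1 ≤ K) (h : ℝ → ℝ) (hh : Measurable h) (h0 : ∀ u, 0 ≤ h u) (h1 : ∀ u, h u ≤ 1) :
    |∫ x : Fin v → ℝ, D (x e.1, x e.2) * (∏ p ∈ (edg G).erase e, R p (x p.1, x p.2)) * ∏ a, h (x a)
      ∂(Measure.pi fun _ : Fin v => unif01)|
      ≤ K ^ (edg G).card * K ^ (edg G).card * (4 * η) + K ^ (1 - q) * A := by
  classical
  set π := (Measure.pi fun _ : Fin v => unif01) with hπ
  have hK0 : 0 < K := by linarith
  set RK : (Fin v × Fin v) → ℝ × ℝ → ℝ := fun p z => if M z ≤ K then R p z else 0 with hRK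
  have hRKm : ∀ p, Measurable (RK p) := fun p =>
    Measurable.ite (measurableSet_le hM measurable_const) (hR p) measurable_const
  have hRKK : ∀ p z, |RK p z| ≤ K := by
    intro p z
    simp only [hRK]; split_ifs with hz
    · exact (hRM p z).trans hz
    · simp; linarith
  have hRKM : ∀ p z, |RK p z| ≤ M z := by
    intro p z
    simp only [hRK]; split_ifs with hz
    · exact (hRM p z)
    · simp; linarith [hM1 z]
  set m : (Fin v → ℝ) → ℝ := fun x => ∏ p ∈ edg G, M (x p.1, x p.2) with hm
  have hm1 : ∀ x, 1 ≤ m x := fun x => by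
    rw [← Finset.prod_const_one (s := edg G) (M := ℝ)]
    exact Finset.prod_le_prod (fun _ _ => zero_le_one) (fun p _ => hM1 _)
  have hmq : ∀ x, m x ≤ m x ^ q := fun x => by
    conv_lhs => rw [← Real.rpow_one (m x)]
    exact Real.rpow_le_rpow_of_exponent_le (hm1 x) hq.le
  have hmeas : ∀ R' : (Fin v × Fin v) → ℝ × ℝ → ℝ, (∀ p, Measurable (R' p)) →
      Measurable (fun x : Fin v → ℝ =>
        D (x e.1, x e.2) * (∏ p ∈ (edg G).erase e, R' p (x p.1, x p.2)) * ∏ a, h (x a)) := by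
    intro R' hR'
    refine ((hDm.comp (meas_pair _ _)).mul (Finset.measurable_prod _ fun p _ =>
      (hR' p).comp (meas_pair _ _))).mul (Finset.measurable_prod _ fun a _ => hh.comp (measurable_pi_apply a))
  have hhp : ∀ x : Fin v → ℝ, |∏ a, h (x a)| ≤ 1 := by
    intro x
    rw [abs_of_nonneg (Finset.prod_nonneg fun a _ => h0 _)]
    exact Finset.prod_le_one (fun a _ => h0 _) (fun a _ => h1 _)
  have hbd : ∀ R' : (Fin v × Fin v) → ℝ × ℝ → ℝ, (∀ p z, |R' p z| ≤ M z) → ∀ x : Fin v → ℝ,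
      |D (x e.1, x e.2) * (∏ p ∈ (edg G).erase e, R' p (x p.1, x p.2)) * ∏ a, h (x a)| ≤ m x := by
    intro R' hR' x
    rw [abs_mul, abs_mul, Finset.abs_prod]
    have : m x = M (x e.1, x e.2) * (∏ p ∈ (edg G).erase e, M (x p.1, x p.2)) * 1 := by
      simp only [hm, mul_one]
      rw [Finset.mul_prod_erase (edg G) (fun p => M (x p.1, x p.2)) he]
    rw [this]
    gcongr
    · exact mul_nonneg (by linarith [hM1 (x e.1, x e.2)])
        (Finset.prod_nonneg fun p _ => by linarith [hM1 (x p.1, x p.2)])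
    · linarith [hM1 (x e.1, x e.2)]
    · exact hDM _
    · exact hR' _ _
    · exact hhp x
  have hInt : ∀ R' : (Fin v × Fin v) → ℝ × ℝ → ℝ, (∀ p, Measurable (R' p)) → (∀ p z, |R' p z| ≤ M z) →
      Integrable (fun x : Fin v → ℝ =>
        D (x e.1, x e.2) * (∏ p ∈ (edg G).erase e, R' p (x p.1, x p.2)) * ∏ a, h (x a)) π := by
    intro R' h1 h2
    refine hinteg.mono' (hmeas R' h1).aestronglyMeasurable (Eventually.of_forall fun x => ?_)
    exact (hbd R' h2 x).trans (hmq x)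
  have hdiff : ∀ x : Fin v → ℝ,
      |D (x e.1, x e.2) * (∏ p ∈ (edg G).erase e, R p (x p.1, x p.2)) * ∏ a, h (x a)
        - D (x e.1, x e.2) * (∏ p ∈ (edg G).erase e, RK p (x p.1, x p.2)) * ∏ a, h (x a)|
        ≤ K ^ (1 - q) * m x ^ q := by
    intro x
    by_cases hx : ∀ p ∈ (edg G).erase e, M (x p.1, x p.2) ≤ K
    · have : ∏ p ∈ (edg G).erase e, RK p (x p.1, x p.2) = ∏ p ∈ (edg G).erase e, R p (x p.1, x p.2) := by
        apply Finset.prod_congr rfl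
        intro p hp
        simp only [hRK, if_pos (hx p hp)]
      rw [this, sub_self, abs_zero]
      have := hm1 x
      positivity
    · push Not at hx
      obtain ⟨p, hp, hpK⟩ := hx
      have : ∏ p ∈ (edg G).erase e, RK p (x p.1, x p.2) = 0 := by
        apply Finset.prod_eq_zero hp
        simp only [hRK, if_neg (not_le.mpr hpK)]
      rw [this, mul_zero, zero_mul, sub_zero]
      refine (hbd R hRM x).trans ?_
      have hmK : K ≤ m x := by
        refine hpK.le.trans ?_
        simp only [hm]
        rw [← Finset.mul_prod_erase (edg G) (fun p => M (x p.1, x p.2)) (Finset.mem_of_mem_erase hp)]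
        refine le_mul_of_one_le_right (by linarith [hM1 (x p.1, x p.2)]) ?_
        rw [← Finset.prod_const_one (s := (edg G).erase p) (M := ℝ)]
        exact Finset.prod_le_prod (fun _ _ => zero_le_one) (fun p _ => hM1 _)
      have hm0 : 0 < m x := by linarith [hm1 x]
      calc m x = m x ^ (1 - q) * m x ^ q := by rw [← Real.rpow_add hm0]; simp
        _ ≤ K ^ (1 - q) * m x ^ q := by
          gcongr ?_ * _
          exact Real.rpow_le_rpow_of_nonpos hK0 hmK (by linarith)
  have hmain : |∫ x : Fin v → ℝ, D (x e.1, x e.2) * (∏ p ∈ (edg G).erase e, RK p (x p.1, x p.2)) * ∏ a, h (x a) ∂π|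
      ≤ K ^ (edg G).card * K ^ (edg G).card * (4 * η) := by
    have hlt : e.1 < e.2 := by simp only [Finset.mem_filter] at he; exact he.2.2
    have hbdp : ∀ F ⊆ edg G, ∀ x : Fin v → ℝ, |∏ p ∈ F, RK p (x p.1, x p.2)| ≤ K ^ (edg G).card := by
      intro F hF x
      rw [Finset.abs_prod]
      calc _ ≤ ∏ p ∈ F, K := Finset.prod_le_prod (fun _ _ => abs_nonneg _) (fun p _ => hRKK _ _)
        _ = K ^ F.card := by simp
        _ ≤ _ := pow_le_pow_right₀ hK (Finset.card_le_card hF)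
    have := resample_bound e.1 e.2 hlt.ne D hD η hc
      (fun x => (∏ p ∈ ((edg G).erase e).filter (fun p => p.1 = e.1 ∨ p.2 = e.1), RK p (x p.1, x p.2)) * h (x e.1))
      (fun x => (∏ p ∈ ((edg G).erase e).filter (fun p => ¬ (p.1 = e.1 ∨ p.2 = e.1)), RK p (x p.1, x p.2)) *
        ∏ a ∈ Finset.univ.erase e.1, h (x a))
      ((Finset.measurable_prod _ fun p _ => (hRKm p).comp (meas_pair _ _)).mul (hh.comp (measurable_pi_apply _)))
      ((Finset.measurable_prod _ fun p _ => (hRKm p).comp (meas_pair _ _)).mul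
        (Finset.measurable_prod _ fun a _ => hh.comp (measurable_pi_apply _)))
      (K ^ (edg G).card) (K ^ (edg G).card) (by positivity) (by positivity) ?_ ?_ ?_ ?_
    · convert this using 3
      ext x
      rw [← Finset.prod_filter_mul_prod_filter_not ((edg G).erase e) (fun p => p.1 = e.1 ∨ p.2 = e.1),
        ← Finset.mul_prod_erase Finset.univ (fun a => h (x a)) (Finset.mem_univ e.1)]
      ring
    · intro x
      rw [abs_mul, ← mul_one (K ^ _)]
      gcongr
      · exact hbdp _ ((Finset.filter_subset _ _).trans (Finset.erase_subset _ _)) x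
      · rw [abs_of_nonneg (h0 _)]; exact h1 _
    · intro x
      rw [abs_mul, ← mul_one (K ^ _)]
      gcongr
      · exact hbdp _ ((Finset.filter_subset _ _).trans (Finset.erase_subset _ _)) x
      · rw [abs_of_nonneg (Finset.prod_nonneg fun a _ => h0 _)]
        exact Finset.prod_le_one (fun a _ => h0 _) (fun a _ => h1 _)
    · intro x t
      rw [Function.update_of_ne hlt.ne]
      congr 1
      apply Finset.prod_congr rfl
      rintro ⟨a, b⟩ hp
      simp only [Finset.mem_filter, Finset.mem_erase, Finset.mem_univ, true_and] at hp
      obtain ⟨⟨hne, hadj, hab⟩, hor⟩ := hp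
      have hb : a ≠ e.2 ∧ b ≠ e.2 := by
        constructor
        · rintro rfl
          rcases hor with h | h
          · exact hlt.ne h.symm
          · subst h; exact absurd hab (not_lt.mpr hlt.le)
        · rintro rfl
          rcases hor with h | h
          · exact hne (by rw [h])
          · exact hlt.ne h.symm
      simp only [Function.update_of_ne hb.1, Function.update_of_ne hb.2]
    · intro x t
      congr 1
      · apply Finset.prod_congr rfl
        rintro ⟨a, b⟩ hp
        simp only [Finset.mem_filter] at hp
        have := hp.2
        push Not at this
        simp only [Function.update_of_ne this.1, Function.update_of_ne this.2]
      · apply Finset.prod_congr rfl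
        intro a ha
        rw [Function.update_of_ne (Finset.ne_of_mem_erase ha)]
  have hI1 := hInt R hR hRM
  have hI2 := hInt RK hRKm hRKM
  have hsub : |∫ x : Fin v → ℝ, (D (x e.1, x e.2) * (∏ p ∈ (edg G).erase e, R p (x p.1, x p.2)) * ∏ a, h (x a)
        - D (x e.1, x e.2) * (∏ p ∈ (edg G).erase e, RK p (x p.1, x p.2)) * ∏ a, h (x a)) ∂π|
        ≤ K ^ (1 - q) * A := by
    refine (abs_integral_le_integral_abs).trans ?_
    calc _ ≤ ∫ x, K ^ (1 - q) * m x ^ q ∂π :=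
          integral_mono (hI1.sub hI2).abs (hinteg.const_mul _) hdiff
      _ = K ^ (1 - q) * ∫ x, m x ^ q ∂π := integral_const_mul _ _
      _ ≤ _ := by gcongr
  rw [integral_sub hI1 hI2] at hsub
  rw [abs_le] at hsub hmain ⊢
  constructor <;> linarith

end

section

lemma finner_real {v : ℕ} (G : SimpleGraph (Fin v)) [DecidableRel G.Adj]
    (D : ℕ) (hD : 1 ≤ D) (hG : G.maxDegree ≤ D) (q : ℝ) (hq : 1 ≤ q)
    (M : ℝ × ℝ → ℝ) (hM : Measurable M) (hM0 : ∀ z, 0 ≤ M z) (C : ℝ≥0∞) (hC : C ≠ ⊤)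
    (hMC : eLpNorm M (ENNReal.ofReal (q * D)) (unif01.prod unif01) ≤ C) :
    Integrable (fun x : Fin v → ℝ => (∏ p ∈ edg G, M (x p.1, x p.2)) ^ q)
      (Measure.pi fun _ : Fin v => unif01) ∧
    ∫ x : Fin v → ℝ, (∏ p ∈ edg G, M (x p.1, x p.2)) ^ q
      ∂(Measure.pi fun _ : Fin v => unif01) ≤ ((C ^ q) ^ (edg G).card).toReal := by
  have hD0 : (0:ℝ) < D := by exact_mod_cast hD
  have hq0 : 0 < q := by linarith
  have hmeas : Measurable (fun x : Fin v → ℝ => (∏ p ∈ edg G, M (x p.1, x p.2)) ^ q) :=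
    (Finset.measurable_prod _ fun p _ => hM.comp (meas_pair _ _)).pow_const _
  have h1 := edge_finner G D hD hG (fun z => ENNReal.ofReal (M z) ^ q)
    (hM.ennreal_ofReal.pow_const _)
  have hnn : ∀ x : Fin v → ℝ, 0 ≤ (∏ p ∈ edg G, M (x p.1, x p.2)) ^ q := fun x =>
    Real.rpow_nonneg (Finset.prod_nonneg fun p _ => hM0 _) _
  have e1 : ∀ x : Fin v → ℝ, ENNReal.ofReal ((∏ p ∈ edg G, M (x p.1, x p.2)) ^ q)
      = ∏ p ∈ edg G, ENNReal.ofReal (M (x p.1, x p.2)) ^ q := by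
    intro x
    rw [← ENNReal.ofReal_rpow_of_nonneg (Finset.prod_nonneg fun p _ => hM0 _) hq0.le,
      ENNReal.ofReal_prod_of_nonneg (fun p _ => hM0 _), ENNReal.prod_rpow_of_nonneg hq0.le]
  have hL : ∫⁻ x, ENNReal.ofReal ((∏ p ∈ edg G, M (x p.1, x p.2)) ^ q)
      ∂(Measure.pi fun _ : Fin v => unif01) ≤ (C ^ q) ^ (edg G).card := by
    simp_rw [e1]
    refine h1.trans ?_
    gcongr
    have hp0 : ENNReal.ofReal (q * D) ≠ 0 := by
      rw [Ne, ENNReal.ofReal_eq_zero, not_le]; positivity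
    rw [eLpNorm_eq_lintegral_rpow_enorm_toReal hp0 ENNReal.ofReal_ne_top,
      ENNReal.toReal_ofReal (by positivity)] at hMC
    calc (∫⁻ z, (ENNReal.ofReal (M z) ^ q) ^ (D:ℝ) ∂(unif01.prod unif01)) ^ ((D:ℝ)⁻¹)
        = ((∫⁻ z, ‖M z‖ₑ ^ (q * D) ∂(unif01.prod unif01)) ^ (1 / (q * D))) ^ q := by
          rw [← ENNReal.rpow_mul]
          congr 1
          · congr 1; funext z
            rw [← ENNReal.rpow_mul, Real.enorm_of_nonneg (hM0 z)]
          · field_simp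
      _ ≤ C ^ q := by gcongr
  have hfin : (C ^ q) ^ (edg G).card ≠ ⊤ :=
    ENNReal.pow_ne_top (ENNReal.rpow_ne_top_of_nonneg hq0.le hC)
  constructor
  · refine ⟨hmeas.aestronglyMeasurable, ?_⟩
    rw [hasFiniteIntegral_iff_ofReal (Eventually.of_forall hnn)]
    exact hL.trans_lt hfin.lt_top
  · rw [integral_eq_lintegral_of_nonneg_ae (Eventually.of_forall hnn) hmeas.aestronglyMeasurable]
    exact ENNReal.toReal_mono hfin hL

lemma integrable_of_kerNorm (U : ℝ → ℝ → ℝ) (hU : Measurable (Function.uncurry U)) (p : ℝ≥0∞)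
    (hp : 1 ≤ p) (h : kerNorm U p ≠ ⊤) : Integrable (Function.uncurry U) (unif01.prod unif01) := by
  have : MemLp (Function.uncurry U) p (unif01.prod unif01) :=
    ⟨hU.aestronglyMeasurable, lt_of_le_of_ne le_top h⟩
  exact this.integrable hp

lemma counting {v : ℕ} (G : SimpleGraph (Fin v)) [DecidableRel G.Adj]
    (D : ℕ) (hD : 1 ≤ D) (hG : G.maxDegree ≤ D) (q : ℝ) (hq : 1 < q) (C : ℝ≥0∞) (hC : C ≠ ⊤)
    (ε : ℝ) (hε : 0 < ε) : ∃ η > 0, ∀ U V : ℝ → ℝ → ℝ, Measurable (Function.uncurry U) →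
      Measurable (Function.uncurry V) → kerNorm U (ENNReal.ofReal (q * D)) ≤ C →
      kerNorm V (ENNReal.ofReal (q * D)) ≤ C → CutLe (fun z => U z.1 z.2 - V z.1 z.2) η →
      ∀ h : ℝ → ℝ, Measurable h → (∀ u, 0 ≤ h u) → (∀ u, h u ≤ 1) →
      |tH G U h - tH G V h| ≤ ε := by
  classical
  have hD1 : (1:ℝ) ≤ D := by exact_mod_cast hD
  set C' : ℝ≥0∞ := 1 + C + C with hC'
  have hC't : C' ≠ ⊤ := by simp [hC', hC]
  set A : ℝ := ((C' ^ q) ^ (edg G).card).toReal with hA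
  have hA0 : 0 ≤ A := ENNReal.toReal_nonneg
  set n := (edg G).card with hn
  -- choose K
  obtain ⟨K, hK1, hKA⟩ : ∃ K : ℝ, 1 ≤ K ∧ n * (K ^ (1 - q) * A) ≤ ε / 2 := by
    have ht : Tendsto (fun K : ℝ => n * (K ^ (1 - q) * A)) atTop (nhds (n * (0 * A))) := by
      refine Tendsto.const_mul _ (Tendsto.mul_const _ ?_)
      have := tendsto_rpow_neg_atTop (y := q - 1) (by linarith)
      simpa using this
    rw [zero_mul, mul_zero] at ht
    obtain ⟨K, hK, hK'⟩ := ((ht.eventually_le_const (show 0 < ε / 2 by linarith)).and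
      (eventually_ge_atTop 1)).exists
    exact ⟨K, hK', hK⟩
  refine ⟨ε / 2 / (n * (K ^ n * K ^ n * 4) + 1), by positivity, ?_⟩
  intro U V hU hV hUC hVC hcut h hh h0 h1
  set η := ε / 2 / (n * (K ^ n * K ^ n * 4) + 1) with hη
  have hp1 : 1 ≤ ENNReal.ofReal (q * D) := by
    rw [ENNReal.one_le_ofReal]; nlinarith
  set M : ℝ × ℝ → ℝ := fun z => 1 + |U z.1 z.2| + |V z.1 z.2| with hM
  have hUm : Measurable fun z : ℝ × ℝ => U z.1 z.2 := hU
  have hVm : Measurable fun z : ℝ × ℝ => V z.1 z.2 := hV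
  have hMm : Measurable M := (measurable_const.add hUm.abs).add hVm.abs
  have hM1 : ∀ z, 1 ≤ M z := fun z => by
    simp only [hM]; linarith [abs_nonneg (U z.1 z.2), abs_nonneg (V z.1 z.2)]
  have hMC : eLpNorm M (ENNReal.ofReal (q * D)) (unif01.prod unif01) ≤ C' := by
    have e : M = ((fun _ => (1:ℝ)) + (fun z : ℝ × ℝ => ‖U z.1 z.2‖)) + (fun z : ℝ × ℝ => ‖V z.1 z.2‖) := by
      funext z; simp [hM]
    rw [e]
    refine (eLpNorm_add_le ?_ ?_ hp1).trans (add_le_add ((eLpNorm_add_le ?_ ?_ hp1).trans (add_le_add ?_ ?_)) ?_)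
    · exact (measurable_const.add hUm.norm).aestronglyMeasurable
    · exact hVm.norm.aestronglyMeasurable
    · exact measurable_const.aestronglyMeasurable
    · exact hUm.norm.aestronglyMeasurable
    · refine (eLpNorm_le_of_ae_bound (C := 1) (Eventually.of_forall fun z => by simp)).trans (by simp)
    · rw [eLpNorm_norm]; exact hUC
    · rw [eLpNorm_norm]; exact hVC
  obtain ⟨hinteg, hintegA⟩ := finner_real G D hD hG q hq.le M hMm (fun z => by linarith [hM1 z]) C' hC't hMC
  have hUi := integrable_of_kerNorm U hU _ hp1 (ne_top_of_le_ne_top hC hUC)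
  have hVi := integrable_of_kerNorm V hV _ hp1 (ne_top_of_le_ne_top hC hVC)
  -- hybrids
  set R : Finset (Fin v × Fin v) → (Fin v × Fin v) → ℝ × ℝ → ℝ :=
    fun S p z => if p ∈ S then U z.1 z.2 else V z.1 z.2 with hR
  have hRm : ∀ S p, Measurable (R S p) := by
    intro S p
    simp only [hR]; split_ifs
    · exact hUm
    · exact hVm
  have hRM : ∀ S p z, |R S p z| ≤ M z := by
    intro S p z
    simp only [hR, hM]; split_ifs <;> linarith [abs_nonneg (U z.1 z.2), abs_nonneg (V z.1 z.2)]
  set F : Finset (Fin v × Fin v) → (Fin v → ℝ) → ℝ :=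
    fun S x => (∏ p ∈ edg G, R S p (x p.1, x p.2)) * ∏ a, h (x a) with hF
  have hFi : ∀ S, Integrable (F S) (Measure.pi fun _ : Fin v => unif01) := by
    intro S
    refine hinteg.mono' ?_ (Eventually.of_forall fun x => ?_)
    · exact ((Finset.measurable_prod _ fun p _ => (hRm S p).comp (meas_pair _ _)).mul
        (Finset.measurable_prod _ fun a _ => hh.comp (measurable_pi_apply _))).aestronglyMeasurable
    · have hm1 : 1 ≤ ∏ p ∈ edg G, M (x p.1, x p.2) := by
        rw [← Finset.prod_const_one (s := edg G) (M := ℝ)]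
        exact Finset.prod_le_prod (fun _ _ => zero_le_one) (fun p _ => hM1 _)
      calc ‖F S x‖ ≤ (∏ p ∈ edg G, M (x p.1, x p.2)) * 1 := by
            simp only [hF]
            rw [Real.norm_eq_abs, abs_mul, Finset.abs_prod]
            gcongr
            · exact hRM _ _ _
            · rw [abs_of_nonneg (Finset.prod_nonneg fun a _ => h0 _)]
              exact Finset.prod_le_one (fun a _ => h0 _) (fun a _ => h1 _)
        _ = (∏ p ∈ edg G, M (x p.1, x p.2)) ^ (1:ℝ) := by rw [mul_one, Real.rpow_one]
        _ ≤ _ := Real.rpow_le_rpow_of_exponent_le hm1 hq.le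
  have hstep : ∀ S ⊆ edg G, ∀ e ∈ edg G, e ∉ S →
      |∫ x, F (insert e S) x ∂(Measure.pi fun _ : Fin v => unif01) - ∫ x, F S x ∂(Measure.pi fun _ : Fin v => unif01)|
      ≤ K ^ n * K ^ n * (4 * η) + K ^ (1 - q) * A := by
    intro S hS e he heS
    rw [← integral_sub (hFi _) (hFi _)]
    have := single_step G q hq M hMm hM1 A hinteg hintegA e he (fun z => U z.1 z.2 - V z.1 z.2)
      (hUm.sub hVm) (hUi.sub hVi) (fun z => by
        refine (abs_sub _ _).trans ?_
        simp only [hM]; linarith) η hcut (R S) (hRm S) (hRM S) K hK1 h hh h0 h1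
    convert this using 3
    ext x
    simp only [hF]
    rw [← sub_mul]
    congr 1
    rw [← Finset.mul_prod_erase (edg G) (fun p => R (insert e S) p (x p.1, x p.2)) he,
      ← Finset.mul_prod_erase (edg G) (fun p => R S p (x p.1, x p.2)) he]
    have e1 : ∏ p ∈ (edg G).erase e, R (insert e S) p (x p.1, x p.2)
        = ∏ p ∈ (edg G).erase e, R S p (x p.1, x p.2) := by
      apply Finset.prod_congr rfl
      intro p hp
      simp only [hR, Finset.mem_insert, Finset.ne_of_mem_erase hp, false_or]
    rw [e1, ← sub_mul]
    congr 1
    simp [hR, heS]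
  have hind : ∀ S : Finset (Fin v × Fin v), S ⊆ edg G →
      |∫ x, F S x ∂(Measure.pi fun _ : Fin v => unif01) - ∫ x, F ∅ x ∂(Measure.pi fun _ : Fin v => unif01)|
      ≤ S.card * (K ^ n * K ^ n * (4 * η) + K ^ (1 - q) * A) := by
    intro S
    induction S using Finset.induction with
    | empty => simp
    | insert e S heS ih =>
      intro hS
      have i1 := ih ((Finset.subset_insert _ _).trans hS)
      have i2 := hstep S ((Finset.subset_insert _ _).trans hS) e (hS (Finset.mem_insert_self _ _)) heS
      rw [Finset.card_insert_of_notMem heS]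
      push_cast
      rw [abs_le] at *
      constructor <;> linarith
  have hfinal := hind (edg G) (Finset.Subset.refl _)
  have eU : tH G U h = ∫ x, F (edg G) x ∂(Measure.pi fun _ : Fin v => unif01) := by
    unfold tH edgeProd
    congr 1; ext x
    simp only [hF]
    congr 1
    apply Finset.prod_congr rfl
    intro p hp
    have hp' : p ∈ edg G := hp
    simp [hR, hp']
  have eV : tH G V h = ∫ x, F ∅ x ∂(Measure.pi fun _ : Fin v => unif01) := by
    unfold tH edgeProd
    simp [hF, hR]
  rw [eU, eV]
  refine hfinal.trans ?_
  have : n * (K ^ n * K ^ n * (4 * η)) ≤ ε / 2 := by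
    rw [hη]
    have hpos : (0:ℝ) < n * (K ^ n * K ^ n * 4) + 1 := by positivity
    calc n * (K ^ n * K ^ n * (4 * (ε / 2 / (n * (K ^ n * K ^ n * 4) + 1))))
        = (n * (K ^ n * K ^ n * 4)) / (n * (K ^ n * K ^ n * 4) + 1) * (ε / 2) := by ring
      _ ≤ 1 * (ε / 2) := by
        gcongr
        rw [div_le_one hpos]; linarith
      _ = _ := one_mul _
  rw [mul_add]
  linarith

lemma tH_bound {v : ℕ} (G : SimpleGraph (Fin v)) [DecidableRel G.Adj]
    (D : ℕ) (hD : 1 ≤ D) (hG : G.maxDegree ≤ D) (q : ℝ) (hq : 1 < q)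
    (U : ℝ → ℝ → ℝ) (hU : Measurable (Function.uncurry U))
    (hUC : kerNorm U (ENNReal.ofReal (q * D)) ≠ ⊤) :
    ∃ B : ℝ, ∀ h : ℝ → ℝ, (∀ u, 0 ≤ h u) → (∀ u, h u ≤ 1) → |tH G U h| ≤ B := by
  have hUm : Measurable fun z : ℝ × ℝ => U z.1 z.2 := hU
  have hD1 : (1:ℝ) ≤ D := by exact_mod_cast hD
  have hle : kerNorm U (ENNReal.ofReal (1 * D)) ≤ kerNorm U (ENNReal.ofReal (q * D)) := by
    apply eLpNorm_le_eLpNorm_of_exponent_le _ hUm.aestronglyMeasurable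
    apply ENNReal.ofReal_le_ofReal
    gcongr
  obtain ⟨h1, h2⟩ := finner_real G D hD hG 1 le_rfl (fun z => ‖U z.1 z.2‖) hUm.norm
    (fun z => norm_nonneg _) (kerNorm U (ENNReal.ofReal (q * D))) hUC (by
      rw [eLpNorm_norm]; exact hle)
  refine ⟨∫ x, (∏ p ∈ edg G, ‖U (x p.1) (x p.2)‖) ^ (1:ℝ) ∂(Measure.pi fun _ => unif01),
    fun h h0 h1' => ?_⟩
  unfold tH
  rw [← Real.norm_eq_abs]
  refine (norm_integral_le_of_norm_le h1 (Eventually.of_forall fun x => ?_))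
  rw [Real.rpow_one, edgeProd, norm_mul, norm_prod]
  refine mul_le_of_le_one_right (Finset.prod_nonneg fun _ _ => norm_nonneg _) ?_
  rw [Real.norm_of_nonneg (Finset.prod_nonneg fun a _ => h0 _)]
  exact Finset.prod_le_one (fun a _ => h0 _) (fun a _ => h1' _)

end

section

/-- the block index of a point. -/
noncomputable def idx (n : ℕ) [NeZero n] (x : ℝ) : Fin n :=
  ⟨min (⌈(n:ℝ) * x⌉₊ - 1) (n - 1), by have := NeZero.pos n; omega⟩

lemma idx_meas (n : ℕ) [NeZero n] : Measurable (idx n) := by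
  have h1 : Measurable fun x : ℝ => ⌈(n:ℝ) * x⌉₊ := Nat.measurable_ceil.comp (measurable_const_mul _)
  have h2 : Measurable fun k : ℕ => (⟨min (k - 1) (n - 1), by have := NeZero.pos n; omega⟩ : Fin n) :=
    measurable_from_nat
  exact h2.comp h1

lemma idx_iff (n : ℕ) [NeZero n] (x : ℝ) (hx : x ∈ Ioc (0:ℝ) 1) (i : Fin n) :
    idx n x = i ↔ x ∈ Ioc (((i : ℕ) : ℝ)/n) ((((i : ℕ) : ℝ)+1)/n) := by
  have hn : (0:ℝ) < n := by exact_mod_cast NeZero.pos n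
  have hc1 : 0 < ⌈(n:ℝ) * x⌉₊ := Nat.ceil_pos.mpr (mul_pos hn hx.1)
  have hc2 : ⌈(n:ℝ) * x⌉₊ ≤ n := by
    apply Nat.ceil_le.mpr; nlinarith [hx.2]
  have key : idx n x = i ↔ ⌈(n:ℝ) * x⌉₊ = (i:ℕ) + 1 := by
    rw [Fin.ext_iff]; unfold idx; simp only
    have := i.2
    omega
  rw [key, Nat.ceil_eq_iff (by omega), mem_Ioc, div_lt_iff₀ hn, le_div_iff₀ hn]
  push_cast
  simp only [add_tsub_cancel_right, mul_comm x]

lemma ae_Ioc : ∀ᵐ x ∂unif01, x ∈ Ioc (0:ℝ) 1 := by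
  unfold unif01
  rw [← restrict_Ioc_eq_restrict_Icc]
  exact ae_restrict_mem measurableSet_Ioc

lemma stepKernel_eq (n : ℕ) [NeZero n] (Q : Fin n → Fin n → ℝ) (x y : ℝ) (hx : x ∈ Ioc (0:ℝ) 1)
    (hy : y ∈ Ioc (0:ℝ) 1) : stepKernel n Q x y = Q (idx n x) (idx n y) := by
  unfold stepKernel
  simp_rw [← idx_iff n x hx, ← idx_iff n y hy]
  rw [Finset.sum_eq_single (idx n x), Finset.sum_eq_single (idx n y)]
  · simp
  · intro j _ hj; simp [hj.symm]
  · simp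
  · intro j _ hj; simp [hj.symm]
  · simp

/-- partitions into n pieces of equal mass. -/
def EqPart {n : ℕ} (ι : ℝ → Fin n) : Prop :=
  Measurable ι ∧ ∀ i, unif01.real (ι ⁻¹' {i}) = 1 / n

lemma idx_eqPart (n : ℕ) [NeZero n] : EqPart (idx n) := by
  refine ⟨idx_meas n, fun i => ?_⟩
  have hn : (0:ℝ) < n := by exact_mod_cast NeZero.pos n
  have h1 : idx n ⁻¹' {i} =ᵐ[unif01] Ioc (((i : ℕ) : ℝ)/n) ((((i : ℕ) : ℝ)+1)/n) := by
    filter_upwards [ae_Ioc] with x hx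
    exact propext (idx_iff n x hx i)
  rw [measureReal_congr h1, measureReal_def, unif01, Measure.restrict_apply measurableSet_Ioc,
    inter_eq_left.mpr, Real.volume_Ioc, ENNReal.toReal_ofReal]
  · field_simp; ring
  · rw [← sub_div]; simp; 
  · intro x hx
    constructor
    · exact le_trans (by positivity) hx.1.le
    · refine hx.2.trans ?_
      rw [div_le_one hn]
      exact_mod_cast i.2

lemma meas_Q {n : ℕ} (Q : Fin n → Fin n → ℝ) (ι : ℝ → Fin n) (hι : Measurable ι) :
    Measurable (Function.uncurry fun x y => Q (ι x) (ι y)) := by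
  have h1 : Measurable fun p : Fin n × Fin n => Q p.1 p.2 := measurable_of_countable _
  exact h1.comp ((hι.comp measurable_fst).prodMk (hι.comp measurable_snd))

lemma int_Q {n : ℕ} (Q : Fin n → Fin n → ℝ) (ι : ℝ → Fin n) (hι : Measurable ι) :
    Integrable (Function.uncurry fun x y => Q (ι x) (ι y)) (unif01.prod unif01) := by
  refine Integrable.of_bound (C := ∑ i, ∑ j, |Q i j|) (meas_Q Q ι hι).aestronglyMeasurable
    (Eventually.of_forall fun z => ?_)
  simp only [Function.uncurry, Real.norm_eq_abs]
  calc |Q (ι z.1) (ι z.2)| ≤ ∑ j, |Q (ι z.1) j| :=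
        Finset.single_le_sum (f := fun j => |Q (ι z.1) j|) (fun j _ => abs_nonneg _) (Finset.mem_univ _)
    _ ≤ _ := Finset.single_le_sum (f := fun i => ∑ j, |Q i j|)
        (fun j _ => Finset.sum_nonneg fun _ _ => abs_nonneg _) (Finset.mem_univ _)

lemma cutLe_of_cutDist (U W : ℝ → ℝ → ℝ)
    (hD : Integrable (fun z : ℝ × ℝ => U z.1 z.2 - W z.1 z.2) (unif01.prod unif01)) :
    CutLe (fun z => U z.1 z.2 - W z.1 z.2) (cutDist U W) := by
  have key : ∀ S T : Set ℝ, MeasurableSet S → MeasurableSet T →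
      ∫ z in S ×ˢ T, (U z.1 z.2 - W z.1 z.2) ∂(unif01.prod unif01) =
      ∫ x in Icc (0:ℝ) 1 ∩ S, ∫ y in Icc (0:ℝ) 1 ∩ T, (U x y - W x y) := by
    intro S T hS hT
    rw [setIntegral_prod _ hD.integrableOn]
    unfold unif01
    rw [Measure.restrict_restrict hS, Measure.restrict_restrict hT, inter_comm S, inter_comm T]
  set B := ∫ z, |U z.1 z.2 - W z.1 z.2| ∂(unif01.prod unif01) with hB
  have hbd : ∀ S T : Set ℝ, MeasurableSet S → MeasurableSet T →
      |∫ x in Icc (0:ℝ) 1 ∩ S, ∫ y in Icc (0:ℝ) 1 ∩ T, (U x y - W x y)| ≤ B := by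
    intro S T hS hT
    rw [← key S T hS hT]
    refine (abs_integral_le_integral_abs).trans ?_
    exact setIntegral_le_integral hD.abs (Eventually.of_forall fun _ => abs_nonneg _)
  have : Nonempty {S : Set ℝ // MeasurableSet S} := ⟨⟨∅, MeasurableSet.empty⟩⟩
  intro S T hS hT
  rw [key S T hS hT]
  have b1 : BddAbove (range fun T : {T : Set ℝ // MeasurableSet T} =>
      |∫ x in Icc (0:ℝ) 1 ∩ S, ∫ y in Icc (0:ℝ) 1 ∩ T.1, (U x y - W x y)|) :=
    ⟨B, by rintro _ ⟨T, rfl⟩; exact hbd S T.1 hS T.2⟩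
  have b2 : BddAbove (range fun S : {S : Set ℝ // MeasurableSet S} =>
      ⨆ T : {T : Set ℝ // MeasurableSet T},
      |∫ x in Icc (0:ℝ) 1 ∩ S.1, ∫ y in Icc (0:ℝ) 1 ∩ T.1, (U x y - W x y)|) :=
    ⟨B, by rintro _ ⟨S, rfl⟩; exact ciSup_le fun T => hbd S.1 T.1 S.2 T.2⟩
  exact (le_ciSup b1 ⟨T, hT⟩).trans (le_ciSup b2 ⟨S, hS⟩)

lemma exists_part (n : ℕ) [NeZero n] (Q : Fin n → Fin n → ℝ) (W : ℝ → ℝ → ℝ)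
    (hW : Integrable (Function.uncurry W) (unif01.prod unif01)) (ε : ℝ) (hε : 0 < ε) :
    ∃ ι : ℝ → Fin n, EqPart ι ∧
      (∀ p, kerNorm (fun x y => Q (ι x) (ι y)) p = kerNorm (stepKernel n Q) p) ∧
      CutLe (fun z => Q (ι z.1) (ι z.2) - W z.1 z.2) (weakCutDist (stepKernel n Q) W + ε) := by
  have : Nonempty {σ : ℝ → ℝ // MPB σ} := ⟨⟨id, bijOn_id _, MeasurePreserving.id _⟩⟩
  obtain ⟨⟨σ, hσb, hσ⟩, hσd⟩ := exists_lt_of_ciInf_lt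
    (show weakCutDist (stepKernel n Q) W < weakCutDist (stepKernel n Q) W + ε by linarith)
  have hι : Measurable (idx n ∘ σ) := (idx_meas n).comp hσ.measurable
  have hae0 : ∀ᵐ x ∂unif01, σ x ∈ Ioc (0:ℝ) 1 := hσ.quasiMeasurePreserving.ae ae_Ioc
  have hae : ∀ᵐ z ∂(unif01.prod unif01), stepKernel n Q (σ z.1) (σ z.2)
      = Q ((idx n ∘ σ) z.1) ((idx n ∘ σ) z.2) := by
    filter_upwards [Measure.quasiMeasurePreserving_fst.ae hae0,
      Measure.quasiMeasurePreserving_snd.ae hae0] with z h1 h2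
    exact stepKernel_eq n Q _ _ h1 h2
  have hae' : ∀ᵐ z ∂(unif01.prod unif01), stepKernel n Q z.1 z.2
      = Q (idx n z.1) (idx n z.2) := by
    filter_upwards [Measure.quasiMeasurePreserving_fst.ae ae_Ioc,
      Measure.quasiMeasurePreserving_snd.ae ae_Ioc] with z h1 h2
    exact stepKernel_eq n Q _ _ h1 h2
  refine ⟨idx n ∘ σ, ⟨hι, fun i => ?_⟩, fun p => ?_, ?_⟩
  · rw [preimage_comp, measureReal_def, hσ.measure_preimage
      ((idx_meas n) (measurableSet_singleton i)).nullMeasurableSet, ← measureReal_def]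
    exact (idx_eqPart n).2 i
  · unfold kerNorm
    rw [eLpNorm_congr_ae hae']
    exact eLpNorm_comp_measurePreserving (f := Prod.map σ σ) (g := fun z : ℝ × ℝ => Q (idx n z.1) (idx n z.2))
      (meas_Q Q _ (idx_meas n)).aestronglyMeasurable (hσ.prod hσ)
  · have hD : Integrable (fun z : ℝ × ℝ => stepKernel n Q (σ z.1) (σ z.2) - W z.1 z.2)
        (unif01.prod unif01) := by
      refine ((int_Q Q _ hι).sub hW).congr ?_
      filter_upwards [hae] with z hz
      simp [Function.uncurry, hz]
    have hc := cutLe_of_cutDist (fun x y => stepKernel n Q (σ x) (σ y)) W hD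
    intro S T hS hT
    refine le_trans (le_of_eq ?_) ((hc S T hS hT).trans hσd.le)
    congr 1
    apply integral_congr_ae
    refine ae_restrict_of_ae ?_
    filter_upwards [hae] with z hz
    rw [hz]

end

section

section avg
variable {α β : Type*} [MeasurableSpace α] [Fintype β] [MeasurableSpace β]
  [MeasurableSingletonClass β]

lemma lint_decomp (μ : Measure α) (κ : α → β) (hκ : Measurable κ) (f : α → ℝ≥0∞) :
    ∫⁻ x, f x ∂μ = ∑ b, ∫⁻ x in κ ⁻¹' {b}, f x ∂μ := by
  classical
  have hU : (⋃ b ∈ (Finset.univ : Finset β), κ ⁻¹' {b}) = univ := by ext x; simp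
  rw [← setLIntegral_univ, ← hU, lintegral_biUnion_finset]
  · intro a _ b _ hab
    exact Disjoint.preimage _ (by simpa using hab)
  · intro b _; exact hκ (measurableSet_singleton b)

lemma int_decomp (μ : Measure α) (κ : α → β) (hκ : Measurable κ) (f : α → ℝ)
    (hf : Integrable f μ) :
    ∫ x, f x ∂μ = ∑ b, ∫ x in κ ⁻¹' {b}, f x ∂μ := by
  classical
  have hU : (⋃ b, κ ⁻¹' {b}) = univ := by ext x; simp
  rw [← setIntegral_univ, ← hU, integral_iUnion_fintype]
  · intro b; exact hκ (measurableSet_singleton b)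
  · intro a b hab
    exact Disjoint.preimage _ (by simpa using hab)
  · intro b; exact hf.integrableOn

/-- cell average -/
noncomputable def cavg (μ : Measure α) (κ : α → β) (N : ℝ) (F : α → ℝ) (b : β) : ℝ :=
  N * ∫ x in κ ⁻¹' {b}, F x ∂μ

/-- normalised restriction to a cell -/
noncomputable def cmeas (μ : Measure α) (κ : α → β) (N : ℝ) (b : β) : Measure α :=
  ENNReal.ofReal N • μ.restrict (κ ⁻¹' {b})

lemma cmeas_prob (μ : Measure α) [IsProbabilityMeasure μ] (κ : α → β) (N : ℝ) (hN : 0 < N)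
    (b : β) (h : μ.real (κ ⁻¹' {b}) = 1 / N) : IsProbabilityMeasure (cmeas μ κ N b) := by
  constructor
  unfold cmeas
  rw [Measure.smul_apply, Measure.restrict_apply_univ, smul_eq_mul,
    ← ENNReal.ofReal_toReal (measure_ne_top μ (κ ⁻¹' {b})), ← measureReal_def, h,
    ← ENNReal.ofReal_mul hN.le, mul_one_div_cancel hN.ne', ENNReal.ofReal_one]

lemma cavg_eq (μ : Measure α) (κ : α → β) (N : ℝ) (hN : 0 < N) (F : α → ℝ) (b : β) :
    cavg μ κ N F b = ∫ x, F x ∂(cmeas μ κ N b) := by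
  unfold cavg cmeas
  rw [integral_smul_measure, ENNReal.toReal_ofReal hN.le, smul_eq_mul]

lemma cavg_norm (μ : Measure α) [IsProbabilityMeasure μ] (κ : α → β) (hκ : Measurable κ) (N : ℝ)
    (hN : 0 < N) (h : ∀ b, μ.real (κ ⁻¹' {b}) = 1 / N) (F : α → ℝ) (hF : Integrable F μ)
    (p : ℝ≥0∞) (hp : 1 ≤ p) (hpt : p ≠ ⊤) :
    eLpNorm (fun x => cavg μ κ N F (κ x)) p μ ≤ eLpNorm F p μ := by
  have hp0 : p ≠ 0 := (lt_of_lt_of_le zero_lt_one hp).ne'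
  have hpr : 0 < p.toReal := ENNReal.toReal_pos hp0 hpt
  rw [eLpNorm_eq_lintegral_rpow_enorm_toReal hp0 hpt, eLpNorm_eq_lintegral_rpow_enorm_toReal hp0 hpt]
  gcongr ?_ ^ _
  rw [lint_decomp μ κ hκ, lint_decomp μ κ hκ (fun x => ‖F x‖ₑ ^ p.toReal)]
  refine Finset.sum_le_sum fun b _ => ?_
  have := cmeas_prob μ κ N hN b (h b)
  have h1 : ‖cavg μ κ N F b‖ₑ ≤ eLpNorm F p (cmeas μ κ N b) := by
    rw [cavg_eq μ κ N hN]
    refine (enorm_integral_le_lintegral_enorm _).trans ?_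
    rw [← eLpNorm_one_eq_lintegral_enorm]
    refine eLpNorm_le_eLpNorm_of_exponent_le hp ?_
    exact hF.aestronglyMeasurable.restrict.smul_measure _
  have h2 : ‖cavg μ κ N F b‖ₑ ^ p.toReal ≤ ENNReal.ofReal N * ∫⁻ x in κ ⁻¹' {b}, ‖F x‖ₑ ^ p.toReal ∂μ := by
    rw [eLpNorm_eq_lintegral_rpow_enorm_toReal hp0 hpt] at h1
    refine (ENNReal.rpow_le_rpow h1 hpr.le).trans (le_of_eq ?_)
    rw [← ENNReal.rpow_mul, one_div_mul_cancel hpr.ne', ENNReal.rpow_one, cmeas,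
      lintegral_smul_measure, smul_eq_mul]
  calc ∫⁻ x in κ ⁻¹' {b}, ‖cavg μ κ N F (κ x)‖ₑ ^ p.toReal ∂μ
      = ∫⁻ x in κ ⁻¹' {b}, ‖cavg μ κ N F b‖ₑ ^ p.toReal ∂μ := by
        apply setLIntegral_congr_fun (hκ (measurableSet_singleton b))
        intro x hx
        have hx' : κ x = b := hx
        simp only [hx']
    _ = ‖cavg μ κ N F b‖ₑ ^ p.toReal * μ (κ ⁻¹' {b}) := by rw [setLIntegral_const]
    _ ≤ (ENNReal.ofReal N * ∫⁻ x in κ ⁻¹' {b}, ‖F x‖ₑ ^ p.toReal ∂μ) * μ (κ ⁻¹' {b}) := by gcongr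
    _ = _ := by
      rw [← ENNReal.ofReal_toReal (measure_ne_top μ (κ ⁻¹' {b})), ← measureReal_def, h,
        mul_comm, ← mul_assoc, ← ENNReal.ofReal_mul (by positivity), one_div_mul_cancel hN.ne',
        ENNReal.ofReal_one, one_mul]

lemma cavg_close (μ : Measure α) [IsProbabilityMeasure μ] (κ : α → β) (hκ : Measurable κ) (N : ℝ)
    (hN : 0 < N) (h : ∀ b, μ.real (κ ⁻¹' {b}) = 1 / N) (F : α → ℝ) (hF : Integrable F μ)
    (ε : ℝ) (x : α) (hx : ∀ᵐ y ∂μ, κ y = κ x → |F y - F x| ≤ ε) :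
    |cavg μ κ N F (κ x) - F x| ≤ ε := by
  have := cmeas_prob μ κ N hN (κ x) (h _)
  have hFi : Integrable F (cmeas μ κ N (κ x)) :=
    (hF.restrict).smul_measure ENNReal.ofReal_ne_top
  have : cavg μ κ N F (κ x) - F x = ∫ y, (F y - F x) ∂(cmeas μ κ N (κ x)) := by
    rw [integral_sub hFi (integrable_const _), cavg_eq μ κ N hN]; simp
  rw [this, ← Real.norm_eq_abs]
  refine (norm_integral_le_of_norm_le_const (C := ε) ?_).trans (by simp)
  refine Measure.ae_smul_measure ?_ _
  rw [ae_restrict_iff' (hκ (measurableSet_singleton _))]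
  filter_upwards [hx] with y hy hy'
  exact hy hy'

end avg

/-- the pair cell map -/
noncomputable def idx2 (m : ℕ) [NeZero m] (z : ℝ × ℝ) : Fin m × Fin m := (idx m z.1, idx m z.2)

lemma idx2_meas (m : ℕ) [NeZero m] : Measurable (idx2 m) :=
  ((idx_meas m).comp measurable_fst).prodMk ((idx_meas m).comp measurable_snd)

lemma idx2_pre (m : ℕ) [NeZero m] (b : Fin m × Fin m) :
    idx2 m ⁻¹' {b} = (idx m ⁻¹' {b.1}) ×ˢ (idx m ⁻¹' {b.2}) := by
  ext z; simp [idx2, Prod.ext_iff]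

lemma idx2_mass (m : ℕ) [NeZero m] (b : Fin m × Fin m) :
    (unif01.prod unif01).real (idx2 m ⁻¹' {b}) = 1 / ((m:ℝ) ^ 2) := by
  rw [idx2_pre, measureReal_prod_prod, (idx_eqPart m).2, (idx_eqPart m).2]
  ring

lemma idx_dist (m : ℕ) [NeZero m] (x y : ℝ) (hx : x ∈ Ioc (0:ℝ) 1) (hy : y ∈ Ioc (0:ℝ) 1)
    (h : idx m x = idx m y) : |x - y| ≤ 1 / m := by
  have h1 := (idx_iff m x hx _).1 h
  have h2 := (idx_iff m y hy _).1 rfl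
  have : ((((idx m y : Fin m) : ℕ) : ℝ) + 1) / m = (((idx m y : Fin m) : ℕ) : ℝ) / m + 1 / m := by ring
  rw [mem_Ioc, this] at h1 h2
  rw [abs_le]; constructor <;> linarith [h1.1, h1.2, h2.1, h2.2]

lemma cavg_L1 (W : ℝ × ℝ → ℝ) (hWi : Integrable W (unif01.prod unif01)) (ε : ℝ) (hε : 0 < ε) :
    ∃ M : ℕ, ∀ m : ℕ, ∀ _ : NeZero m, M ≤ m →
      ∫ z, |cavg (unif01.prod unif01) (idx2 m) ((m:ℝ)^2) W (idx2 m z) - W z| ∂(unif01.prod unif01) ≤ ε := by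
  obtain ⟨g, hgs, hg1, hgc, hgi⟩ := hWi.exists_hasCompactSupport_integral_sub_le (ε := ε / 3) (by linarith)
  obtain ⟨δ, hδ, hgu⟩ := Metric.uniformContinuous_iff.1 (hgs.uniformContinuous_of_continuous hgc) (ε / 3) (by linarith)
  obtain ⟨M, hM⟩ := exists_nat_gt (1 / δ)
  refine ⟨M, fun m _ hm => ?_⟩
  have hmpos : (0:ℝ) < m := by exact_mod_cast NeZero.pos m
  have hmδ : 1 / (m:ℝ) < δ := by
    rw [one_div_lt hmpos hδ]
    exact hM.trans_le (by exact_mod_cast hm)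
  set μ := unif01.prod unif01 with hμ
  set N : ℝ := (m:ℝ)^2 with hN
  have hNpos : 0 < N := by positivity
  have hκ := idx2_meas m
  have hmass := idx2_mass m
  have hcm : ∀ F, Measurable fun z => cavg μ (idx2 m) N F (idx2 m z) := fun F =>
    (measurable_of_countable (cavg μ (idx2 m) N F)).comp hκ
  have hci : ∀ F, Integrable (fun z => cavg μ (idx2 m) N F (idx2 m z)) μ := fun F => by
    refine Integrable.of_bound (C := ∑ b, |cavg μ (idx2 m) N F b|) (hcm F).aestronglyMeasurable
      (Eventually.of_forall fun z => ?_)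
    exact Finset.single_le_sum (f := fun b => |cavg μ (idx2 m) N F b|) (fun b _ => abs_nonneg _)
      (Finset.mem_univ _)
  have hD : Integrable (fun z => W z - g z) μ := hWi.sub hgi
  have h1 : ∫ z, |cavg μ (idx2 m) N (fun z => W z - g z) (idx2 m z)| ∂μ ≤ ε / 3 := by
    have := cavg_norm μ (idx2 m) hκ N hNpos hmass _ hD 1 le_rfl ENNReal.one_ne_top
    rw [eLpNorm_one_eq_lintegral_enorm, eLpNorm_one_eq_lintegral_enorm] at this
    refine le_trans ?_ hg1
    rw [← integral_congr_ae (Eventually.of_forall fun z => Real.norm_eq_abs _),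
      integral_norm_eq_lintegral_enorm (hcm _).aestronglyMeasurable,
      integral_norm_eq_lintegral_enorm hD.aestronglyMeasurable]
    exact ENNReal.toReal_mono hD.2.ne this
  have hae : ∀ᵐ z ∂μ, z.1 ∈ Ioc (0:ℝ) 1 ∧ z.2 ∈ Ioc (0:ℝ) 1 :=
    (Measure.quasiMeasurePreserving_fst.ae ae_Ioc).and (Measure.quasiMeasurePreserving_snd.ae ae_Ioc)
  have h2 : ∀ᵐ z ∂μ, |cavg μ (idx2 m) N g (idx2 m z) - g z| ≤ ε / 3 := by
    filter_upwards [hae] with z hz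
    apply cavg_close μ (idx2 m) hκ N hNpos hmass g hgi
    filter_upwards [hae] with y hy hyz
    rw [← Real.dist_eq]
    refine (hgu ?_).le
    simp only [idx2, Prod.mk.injEq] at hyz
    rw [Prod.dist_eq]
    apply max_lt
    · exact (idx_dist m _ _ hy.1 hz.1 hyz.1).trans_lt hmδ
    · exact (idx_dist m _ _ hy.2 hz.2 hyz.2).trans_lt hmδ
  have hlin : ∀ b, cavg μ (idx2 m) N (fun z => W z - g z) b = cavg μ (idx2 m) N W b - cavg μ (idx2 m) N g b := by
    intro b
    unfold cavg
    rw [integral_sub hWi.integrableOn hgi.integrableOn, mul_sub]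
  calc ∫ z, |cavg μ (idx2 m) N W (idx2 m z) - W z| ∂μ
      ≤ ∫ z, (|cavg μ (idx2 m) N (fun z => W z - g z) (idx2 m z)| + (ε / 3 + |W z - g z|)) ∂μ := by
        apply integral_mono_ae ((hci W).sub hWi).abs
          ((hci _).abs.add ((integrable_const _).add hD.abs))
        filter_upwards [h2] with z hz
        simp only [hlin]
        calc |cavg μ (idx2 m) N W (idx2 m z) - W z| = |(cavg μ (idx2 m) N W (idx2 m z) - cavg μ (idx2 m) N g (idx2 m z)) +
              ((cavg μ (idx2 m) N g (idx2 m z) - g z) - (W z - g z))| := by congr 1; ring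
          _ ≤ |cavg μ (idx2 m) N W (idx2 m z) - cavg μ (idx2 m) N g (idx2 m z)| +
              (ε / 3 + |W z - g z|) := by
            refine (abs_add_le _ _).trans ?_
            have := abs_sub (cavg μ (idx2 m) N g (idx2 m z) - g z) (W z - g z)
            linarith
    _ = ∫ z, |cavg μ (idx2 m) N (fun z => W z - g z) (idx2 m z)| ∂μ + (ε / 3 + ∫ z, |W z - g z| ∂μ) := by
        have i2 : Integrable (fun z => ε / 3 + |W z - g z|) μ := (integrable_const _).add hD.abs
        rw [integral_add (hci _).abs i2, integral_add (integrable_const _) hD.abs]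
        simp
    _ ≤ ε := by
      have : ∫ z, |W z - g z| ∂μ ≤ ε / 3 := hg1
      linarith

lemma W_approx (U : ℕ → ℝ → ℝ → ℝ)
    (hUi : ∀ n, Integrable (Function.uncurry (U n)) (unif01.prod unif01))
    (W : ℝ → ℝ → ℝ) (hWm : Measurable (Function.uncurry W))
    (hWi : Integrable (Function.uncurry W) (unif01.prod unif01))
    (p : ℝ≥0∞) (hp : 1 ≤ p) (hpt : p ≠ ⊤) (C : ℝ≥0∞) (hC : ∀ᶠ n in atTop, kerNorm (U n) p ≤ C)
    (η : ℕ → ℝ) (hη : Tendsto η atTop (nhds 0))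
    (hcut : ∀ n, CutLe (fun z => U n z.1 z.2 - W z.1 z.2) (η n)) :
    kerNorm W p ≤ C ∧ ∀ δ > 0, ∃ m : ℕ, ∃ _ : NeZero m, ∃ w : Fin m → Fin m → ℝ,
      kerNorm (fun x y => w (idx m x) (idx m y)) p ≤ C ∧
      CutLe (fun z => W z.1 z.2 - w (idx m z.1) (idx m z.2)) δ := by
  set μ := unif01.prod unif01 with hμ
  set W' : ℝ × ℝ → ℝ := Function.uncurry W with hW'
  have hcm : ∀ (m : ℕ) [NeZero m] (F : ℝ × ℝ → ℝ), Measurable fun z => cavg μ (idx2 m) ((m:ℝ)^2) F (idx2 m z) :=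
    fun m _ F => (measurable_of_countable (cavg μ (idx2 m) ((m:ℝ)^2) F)).comp (idx2_meas m)
  -- norms of averages
  have hA : ∀ (m : ℕ) [NeZero m], eLpNorm (fun z => cavg μ (idx2 m) ((m:ℝ)^2) W' (idx2 m z)) p μ ≤ C := by
    intro m _
    have hmpos : (0:ℝ) < m := by exact_mod_cast NeZero.pos m
    have hconv : ∀ b, Tendsto (fun n => cavg μ (idx2 m) ((m:ℝ)^2) (Function.uncurry (U n)) b) atTop
        (nhds (cavg μ (idx2 m) ((m:ℝ)^2) W' b)) := by
      intro b
      apply Tendsto.const_mul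
      rw [tendsto_iff_norm_sub_tendsto_zero]
      refine squeeze_zero (fun _ => norm_nonneg _) (fun n => ?_) hη
      rw [← integral_sub (hUi n).integrableOn hWi.integrableOn, idx2_pre]
      exact hcut n _ _ (idx_meas m (measurableSet_singleton _)) (idx_meas m (measurableSet_singleton _))
    refine (Lp.eLpNorm_lim_le_liminf_eLpNorm
      (f := fun n z => cavg μ (idx2 m) ((m:ℝ)^2) (Function.uncurry (U n)) (idx2 m z))
      (fun n => (hcm m _).aestronglyMeasurable) _
      (Eventually.of_forall fun z => hconv (idx2 m z))).trans ?_
    refine liminf_le_of_frequently_le' (Eventually.frequently ?_)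
    filter_upwards [hC] with n hn
    exact (cavg_norm μ (idx2 m) (idx2_meas m) _ (by positivity) (idx2_mass m) _ (hUi n) p hp hpt).trans hn
  constructor
  · -- Fatou
    have hL1 : Tendsto (fun k : ℕ => eLpNorm ((fun z => cavg μ (idx2 (k+1)) (((k+1:ℕ):ℝ)^2) W' (idx2 (k+1) z)) - W') 1 μ) atTop (nhds 0) := by
      rw [ENNReal.tendsto_atTop_zero]
      intro ε hε
      by_cases hεt : ε = ⊤
      · exact ⟨0, fun n _ => hεt ▸ le_top⟩
      obtain ⟨M, hM⟩ := cavg_L1 W' hWi ε.toReal (ENNReal.toReal_pos hε.ne' hεt)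
      refine ⟨M, fun n hn => ?_⟩
      have h1 := hM (n+1) inferInstance (by omega)
      rw [eLpNorm_one_eq_lintegral_enorm]
      have hm' : Measurable (fun z => cavg μ (idx2 (n+1)) (((n+1:ℕ):ℝ)^2) W' (idx2 (n+1) z) - W' z) :=
        (hcm (n+1) W').sub hWm
      rw [← integral_congr_ae (Eventually.of_forall fun z => Real.norm_eq_abs _),
        integral_norm_eq_lintegral_enorm hm'.aestronglyMeasurable] at h1
      by_cases htop : (∫⁻ x, ‖cavg μ (idx2 (n+1)) (((n+1:ℕ):ℝ)^2) W' (idx2 (n+1) x) - W' x‖ₑ ∂μ) = ⊤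
      · exfalso
        have hi : Integrable (fun z => cavg μ (idx2 (n+1)) (((n+1:ℕ):ℝ)^2) W' (idx2 (n+1) z) - W' z) μ := by
          refine Integrable.sub ?_ hWi
          have := hA (n+1)
          refine Integrable.of_bound (C := ∑ b, |cavg μ (idx2 (n+1)) (((n+1:ℕ):ℝ)^2) W' b|) (hcm _ W').aestronglyMeasurable
            (Eventually.of_forall fun z => ?_)
          exact Finset.single_le_sum (f := fun b => |cavg μ (idx2 (n+1)) (((n+1:ℕ):ℝ)^2) W' b|) (fun b _ => abs_nonneg _)
            (Finset.mem_univ _)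
        exact hi.2.ne htop
      · rw [ENNReal.toReal_le_toReal htop hεt] at h1
        exact h1
    have hmeas := tendstoInMeasure_of_tendsto_eLpNorm (μ := μ) one_ne_zero
      (fun k => (hcm (k+1) W').aestronglyMeasurable) hWm.aestronglyMeasurable hL1
    obtain ⟨ns, -, hns⟩ := hmeas.exists_seq_tendsto_ae
    refine (Lp.eLpNorm_lim_le_liminf_eLpNorm
      (f := fun k z => cavg μ (idx2 (ns k+1)) (((ns k+1:ℕ):ℝ)^2) W' (idx2 (ns k+1) z))
      (fun k => (hcm _ W').aestronglyMeasurable) W' hns).trans ?_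
    exact liminf_le_of_frequently_le' (Eventually.frequently (Eventually.of_forall fun k => hA _))
  · intro δ hδ
    obtain ⟨M, hM⟩ := cavg_L1 W' hWi δ hδ
    refine ⟨M+1, inferInstance, fun i j => cavg μ (idx2 (M+1)) (((M+1:ℕ):ℝ)^2) W' (i, j), hA (M+1), ?_⟩
    have h1 := hM (M+1) inferInstance (by omega)
    have hi : Integrable (fun z => cavg μ (idx2 (M+1)) (((M+1:ℕ):ℝ)^2) W' (idx2 (M+1) z)) μ := by
      refine Integrable.of_bound (C := ∑ b, |cavg μ (idx2 (M+1)) (((M+1:ℕ):ℝ)^2) W' b|) (hcm _ W').aestronglyMeasurable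
        (Eventually.of_forall fun z => ?_)
      exact Finset.single_le_sum (f := fun b => |cavg μ (idx2 (M+1)) (((M+1:ℕ):ℝ)^2) W' b|) (fun b _ => abs_nonneg _)
        (Finset.mem_univ _)
    intro S T hS hT
    refine le_trans ?_ h1
    refine abs_integral_le_integral_abs.trans ?_
    refine (setIntegral_le_integral (hWi.sub hi).abs (Eventually.of_forall fun _ => abs_nonneg _)).trans ?_
    refine le_of_eq (integral_congr_ae (Eventually.of_forall fun z => ?_))
    exact abs_sub_comm _ _

end

section

lemma block_formula {v m : ℕ} (κ : ℝ → Fin m) (hκ : Measurable κ) (Φ : (Fin v → Fin m) → ℝ)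
    (h : ℝ → ℝ) (hh : Measurable h) (h0 : ∀ u, 0 ≤ h u) (h1 : ∀ u, h u ≤ 1) :
    ∫ x : Fin v → ℝ, Φ (fun a => κ (x a)) * ∏ a, h (x a) ∂(Measure.pi fun _ : Fin v => unif01)
      = ∑ i : Fin v → Fin m, Φ i * ∏ a, ∫ u in κ ⁻¹' {i a}, h u ∂unif01 := by
  classical
  have hK : Measurable fun (x : Fin v → ℝ) (a : Fin v) => κ (x a) :=
    measurable_pi_lambda _ fun a => hκ.comp (measurable_pi_apply a)
  have hΦ : Measurable Φ := measurable_of_countable _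
  have hinteg : Integrable (fun x : Fin v → ℝ => Φ (fun a => κ (x a)) * ∏ a, h (x a))
      (Measure.pi fun _ : Fin v => unif01) := by
    refine Integrable.of_bound (C := ∑ i, |Φ i|) ((hΦ.comp hK).mul
        (Finset.measurable_prod _ fun a _ => hh.comp (measurable_pi_apply _))).aestronglyMeasurable
      (Eventually.of_forall fun x => ?_)
    rw [Real.norm_eq_abs, abs_mul]
    refine le_trans (mul_le_of_le_one_right (abs_nonneg _) ?_)
      (Finset.single_le_sum (f := fun i => |Φ i|) (fun i _ => abs_nonneg _) (Finset.mem_univ _))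
    rw [abs_of_nonneg (Finset.prod_nonneg fun a _ => h0 _)]
    exact Finset.prod_le_one (fun a _ => h0 _) (fun a _ => h1 _)
  rw [int_decomp _ _ hK _ hinteg]
  refine Finset.sum_congr rfl fun i _ => ?_
  have hs : (fun (x : Fin v → ℝ) (a : Fin v) => κ (x a)) ⁻¹' {i} = Set.univ.pi fun a => κ ⁻¹' {i a} := by
    ext x; simp [funext_iff]
  rw [setIntegral_congr_fun (g := fun x => Φ i * ∏ a, h (x a)) (hK (measurableSet_singleton i))
    (fun x hx => by
      have hx' : (fun a => κ (x a)) = i := hx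
      simp only [hx'])]
  rw [integral_const_mul, hs, Measure.restrict_pi_pi,
    integral_fintype_prod_eq_prod (f := fun _ => h)]

lemma t_le (t L q : ℝ) (ht : 0 ≤ t) (hL : 0 < L) (hq : 1 < q) : t ≤ L + t ^ q * L ^ (1 - q) := by
  have h2 : 0 ≤ t ^ q * L ^ (1 - q) := by positivity
  rcases le_or_gt t L with h | h
  · linarith
  · have ht' : 0 < t := hL.trans h
    have : t = t ^ q * t ^ (1 - q) := by
      rw [← Real.rpow_add ht']; simp
    have h3 : t ^ (1 - q) ≤ L ^ (1 - q) :=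
      Real.rpow_le_rpow_of_nonpos hL h.le (by linarith)
    have : t ≤ t ^ q * L ^ (1 - q) := by
      calc t = t ^ q * t ^ (1 - q) := this
        _ ≤ _ := by gcongr
    linarith

lemma noninj_card (v : ℕ) : Tendsto (fun n : ℕ =>
    ((Finset.univ.filter (fun i : Fin v → Fin n => ¬ Function.Injective i)).card : ℝ) / (n:ℝ) ^ v)
    atTop (nhds 0) := by
  classical
  have h1 : Tendsto (fun n : ℕ => 1 - (n.descFactorial v : ℝ) / (n:ℝ) ^ v) atTop (nhds (1 - 1)) := by
    refine tendsto_const_nhds.sub ?_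
    have := isEquivalent_descFactorial v
    rw [Asymptotics.isEquivalent_iff_tendsto_one] at this
    · exact this
    · filter_upwards [eventually_gt_atTop 0] with n hn
      have : (n:ℝ) ≠ 0 := by exact_mod_cast hn.ne'
      positivity
  rw [sub_self] at h1
  refine h1.congr' ?_
  filter_upwards [eventually_gt_atTop 0] with n hn
  have hn0 : (n:ℝ) ≠ 0 := by exact_mod_cast hn.ne'
  have e1 : (Finset.univ.filter (fun i : Fin v → Fin n => Function.Injective i)).card = n.descFactorial v := by
    rw [← Fintype.card_subtype, Fintype.card_congr (Equiv.subtypeInjectiveEquivEmbedding _ _),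
      Fintype.card_embedding_eq]
    simp
  have e2 := Finset.card_filter_add_card_filter_not (s := (Finset.univ : Finset (Fin v → Fin n)))
    (fun i : Fin v → Fin n => Function.Injective i)
  rw [e1, Finset.card_univ, Fintype.card_fun, Fintype.card_fin, Fintype.card_fin] at e2
  have e3 : ((Finset.univ.filter (fun i : Fin v → Fin n => ¬ Function.Injective i)).card : ℝ)
      = (n:ℝ) ^ v - n.descFactorial v := by
    rw [eq_sub_iff_add_eq, add_comm]; exact_mod_cast e2
  rw [e3, sub_div, div_self (by positivity)]

lemma noninj_small {v : ℕ} (G : SimpleGraph (Fin v)) [DecidableRel G.Adj]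
    (D : ℕ) (hD : 1 ≤ D) (hG : G.maxDegree ≤ D) (q : ℝ) (hq : 1 < q) (C : ℝ≥0∞) (hC : C ≠ ⊤)
    (ε : ℝ) (hε : 0 < ε) : ∀ᶠ n : ℕ in atTop, ∀ (Q : Fin n → Fin n → ℝ) (ι : ℝ → Fin n), EqPart ι →
      kerNorm (fun x y => Q (ι x) (ι y)) (ENNReal.ofReal (q * D)) ≤ C →
      (∑ i ∈ Finset.univ.filter (fun i : Fin v → Fin n => ¬ Function.Injective i),
        |edgeProd G (fun a b => Q (i a) (i b))|) / (n:ℝ) ^ v ≤ ε := by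
  classical
  set A : ℝ := ((C ^ q) ^ (edg G).card).toReal with hA
  have hA0 : 0 ≤ A := ENNReal.toReal_nonneg
  obtain ⟨L, hL1, hLA⟩ : ∃ L : ℝ, 1 ≤ L ∧ A * L ^ (1 - q) ≤ ε / 2 := by
    have ht : Tendsto (fun L : ℝ => A * L ^ (1 - q)) atTop (nhds (A * 0)) := by
      refine Tendsto.const_mul _ ?_
      have := tendsto_rpow_neg_atTop (y := q - 1) (by linarith)
      simpa using this
    rw [mul_zero] at ht
    obtain ⟨K, hK, hK'⟩ := ((ht.eventually_le_const (show 0 < ε / 2 by linarith)).and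
      (eventually_ge_atTop 1)).exists
    exact ⟨K, hK', hK⟩
  have hL0 : 0 < L := by linarith
  have hcard := (noninj_card v).const_mul L
  rw [mul_zero] at hcard
  filter_upwards [hcard.eventually_le_const (show 0 < ε / 2 by linarith), eventually_gt_atTop 0]
    with n hn hn0 Q ι hι hQC
  have hnv : (0:ℝ) < (n:ℝ) ^ v := by
    have : (0:ℝ) < n := by exact_mod_cast hn0
    positivity
  have hUm := meas_Q Q ι hι.1
  have hUm' : Measurable fun z : ℝ × ℝ => Q (ι z.1) (ι z.2) := hUm
  obtain ⟨-, hf⟩ := finner_real G D hD hG q hq.le (fun z => ‖Q (ι z.1) (ι z.2)‖) hUm'.norm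
    (fun z => norm_nonneg _) C hC (by rw [eLpNorm_norm]; exact hQC)
  have hb := block_formula (v := v) ι hι.1 (fun i => |edgeProd G (fun a b => Q (i a) (i b))| ^ q)
    (fun _ => 1) measurable_const (fun _ => zero_le_one) (fun _ => le_rfl)
  have hcell : ∀ i : Fin n, ∫ u in ι ⁻¹' {i}, (1:ℝ) ∂unif01 = 1 / n := by
    intro i
    rw [setIntegral_const, hι.2 i, smul_eq_mul, mul_one]
  simp only [hcell, Finset.prod_const_one, mul_one, Finset.prod_const, Finset.card_univ,
    Fintype.card_fin, ← Finset.sum_mul] at hb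
  have hS : (∑ i : Fin v → Fin n, |edgeProd G (fun a b => Q (i a) (i b))| ^ q) / (n:ℝ) ^ v ≤ A := by
    rw [div_eq_mul_one_div, ← one_div_pow, ← hb]
    refine le_trans (le_of_eq ?_) hf
    congr 1; ext x
    simp only [edgeProd, Finset.abs_prod, Real.norm_eq_abs]
  calc (∑ i ∈ Finset.univ.filter (fun i : Fin v → Fin n => ¬ Function.Injective i),
        |edgeProd G (fun a b => Q (i a) (i b))|) / (n:ℝ) ^ v
      ≤ (∑ i ∈ Finset.univ.filter (fun i : Fin v → Fin n => ¬ Function.Injective i),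
        (L + |edgeProd G (fun a b => Q (i a) (i b))| ^ q * L ^ (1 - q))) / (n:ℝ) ^ v := by
        gcongr with i _
        exact t_le _ _ _ (abs_nonneg _) hL0 hq
    _ = L * (((Finset.univ.filter (fun i : Fin v → Fin n => ¬ Function.Injective i)).card : ℝ) / (n:ℝ) ^ v)
        + (∑ i ∈ Finset.univ.filter (fun i : Fin v → Fin n => ¬ Function.Injective i),
        |edgeProd G (fun a b => Q (i a) (i b))| ^ q) / (n:ℝ) ^ v * L ^ (1 - q) := by
        rw [Finset.sum_add_distrib, Finset.sum_const, nsmul_eq_mul, ← Finset.sum_mul]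
        ring
    _ ≤ ε / 2 + A * L ^ (1 - q) := by
        gcongr
        refine le_trans ?_ hS
        refine div_le_div_of_nonneg_right ?_ hnv.le
        exact Finset.sum_le_sum_of_subset_of_nonneg (Finset.subset_univ _)
          (fun i _ _ => Real.rpow_nonneg (abs_nonneg _) _)
    _ ≤ ε := by linarith

/-- multilinear extension of the colour U-statistic -/
noncomputable def Tn {v : ℕ} (c : ℕ) (G : SimpleGraph (Fin v)) [DecidableRel G.Adj] (n : ℕ)
    (Q : Fin n → Fin n → ℝ) (g : Fin n → Fin c → ℝ) : ℝ :=
  (∑ i ∈ Finset.univ.filter (fun i : Fin v → Fin n => Function.Injective i),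
    (∑ r, ∏ a, g (i a) r) * edgeProd G (fun a b => Q (i a) (i b))) / (n:ℝ) ^ v

lemma Tn_ustat {v : ℕ} (hv : 0 < v) (c : ℕ) (G : SimpleGraph (Fin v)) [DecidableRel G.Adj] (n : ℕ)
    (Q : Fin n → Fin n → ℝ) (x : Fin n → Fin c) :
    Ustat G (monoPhi c v) n Q x = Tn c G n Q (fun i r => if x i = r then 1 else 0) := by
  unfold Ustat Tn
  congr 1
  refine Finset.sum_congr rfl fun i _ => ?_
  congr 1
  unfold monoPhi
  have h : ∀ r, (∏ a : Fin v, if x (i a) = r then (1:ℝ) else 0) = if ∀ a, x (i a) = r then 1 else 0 := by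
    intro r
    rw [Finset.prod_ite_zero]; simp
  simp only [h, Function.comp]
  let a0 : Fin v := ⟨0, hv⟩
  by_cases hm : ∀ a b, x (i a) = x (i b)
  · rw [if_pos hm, Finset.sum_eq_single (x (i a0))]
    · rw [if_pos (fun a => hm a a0)]
    · intro r _ hr
      rw [if_neg (fun h => hr (h a0).symm)]
    · simp
  · rw [if_neg hm]
    symm
    refine Finset.sum_eq_zero fun r _ => ?_
    rw [if_neg (fun h => hm fun a b => (h a).trans (h b).symm)]

lemma tH_block {v : ℕ} (G : SimpleGraph (Fin v)) [DecidableRel G.Adj] {m : ℕ} (w : Fin m → Fin m → ℝ)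
    (κ : ℝ → Fin m) (hκ : Measurable κ)
    (h : ℝ → ℝ) (hh : Measurable h) (h0 : ∀ u, 0 ≤ h u) (h1 : ∀ u, h u ≤ 1) :
    tH G (fun x y => w (κ x) (κ y)) h
      = ∑ i : Fin v → Fin m, edgeProd G (fun a b => w (i a) (i b)) * ∏ a, ∫ u in κ ⁻¹' {i a}, h u ∂unif01 :=
  block_formula κ hκ (fun i => edgeProd G (fun a b => w (i a) (i b))) h hh h0 h1

lemma Tn_close {v : ℕ} (c : ℕ) (G : SimpleGraph (Fin v)) [DecidableRel G.Adj] (n : ℕ) (hn : 0 < n)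
    (Q : Fin n → Fin n → ℝ) (ι : ℝ → Fin n) (hι : EqPart ι) (h : Fin c → ℝ → ℝ)
    (hh : ∀ r, Measurable (h r)) (h0 : ∀ r u, 0 ≤ h r u) (h1 : ∀ r u, h r u ≤ 1)
    (g : Fin n → Fin c → ℝ) (hg : ∀ i r, g i r = n * ∫ u in ι ⁻¹' {i}, h r u ∂unif01) :
    |Tn c G n Q g - ∑ r, tH G (fun x y => Q (ι x) (ι y)) (h r)|
      ≤ c * ((∑ i ∈ Finset.univ.filter (fun i : Fin v → Fin n => ¬ Function.Injective i),
        |edgeProd G (fun a b => Q (i a) (i b))|) / (n:ℝ) ^ v) := by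
  have hn0 : (0:ℝ) < n := by exact_mod_cast hn
  have hg0 : ∀ i r, 0 ≤ g i r := fun i r => by
    rw [hg]; exact mul_nonneg hn0.le (integral_nonneg (h0 r))
  have hg1 : ∀ i r, g i r ≤ 1 := fun i r => by
    rw [hg]
    have : ∫ u in ι ⁻¹' {i}, h r u ∂unif01 ≤ 1 / n := by
      rw [← hι.2 i]
      calc ∫ u in ι ⁻¹' {i}, h r u ∂unif01 ≤ ∫ u in ι ⁻¹' {i}, (1:ℝ) ∂unif01 := by
            apply integral_mono_of_nonneg (Eventually.of_forall (h0 r)) (integrable_const _)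
              (Eventually.of_forall (h1 r))
        _ = _ := by rw [setIntegral_const, smul_eq_mul, mul_one]
    calc n * ∫ u in ι ⁻¹' {i}, h r u ∂unif01 ≤ n * (1 / n) := by gcongr
      _ = 1 := by field_simp
  have hcell : ∀ r i, ∫ u in ι ⁻¹' {i}, h r u ∂unif01 = g i r / n := fun r i => by
    rw [hg]; field_simp
  have e1 : ∑ r, tH G (fun x y => Q (ι x) (ι y)) (h r) =
      (∑ i : Fin v → Fin n, (∑ r, ∏ a, g (i a) r) * edgeProd G (fun a b => Q (i a) (i b))) / (n:ℝ) ^ v := by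
    simp_rw [fun r => tH_block G Q ι hι.1 (h r) (hh r) (h0 r) (h1 r), hcell, Finset.prod_div_distrib]
    rw [Finset.sum_comm, Finset.sum_div]
    refine Finset.sum_congr rfl fun i _ => ?_
    rw [Finset.sum_mul, Finset.sum_div]
    refine Finset.sum_congr rfl fun r _ => ?_
    simp
    ring
  rw [e1, Tn, ← Finset.sum_filter_add_sum_filter_not Finset.univ (fun i : Fin v → Fin n => Function.Injective i),
    ← sub_div, sub_add_cancel_left, neg_div, abs_neg, abs_div, abs_of_pos (by positivity : (0:ℝ) < (n:ℝ)^v),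
    ← mul_div_assoc]
  gcongr
  refine (Finset.abs_sum_le_sum_abs _ _).trans ?_
  rw [Finset.mul_sum]
  refine Finset.sum_le_sum fun i _ => ?_
  rw [abs_mul]
  gcongr
  rw [abs_of_nonneg (Finset.sum_nonneg fun r _ => Finset.prod_nonneg fun a _ => hg0 _ _)]
  calc ∑ r : Fin c, ∏ a, g (i a) r ≤ ∑ r : Fin c, (1:ℝ) :=
        Finset.sum_le_sum fun r _ => Finset.prod_le_one (fun a _ => hg0 _ _) (fun a _ => hg1 _ _)
    _ = c := by simp

end

section

/-- relative entropy of a weight vector -/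
noncomputable def ent1 {c : ℕ} (m g : Fin c → ℝ) : ℝ := ∑ r, g r * Real.log (g r / m r)

lemma gibbs_lower {X : Type*} [Fintype X] (P ν F : X → ℝ) (hP : ∀ x, 0 < P x)
    (hν : ∀ x, 0 ≤ ν x) (hν1 : ∑ x, ν x = 1) :
    ∑ x, ν x * F x - ∑ x, ν x * Real.log (ν x / P x) ≤ Real.log (∑ x, P x * Real.exp (F x)) := by
  classical
  have hne : Nonempty X := by
    by_contra h
    rw [not_nonempty_iff] at h
    simp at hν1
  set Z := ∑ x, P x * Real.exp (F x) with hZ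
  have hZpos : 0 < Z := Finset.sum_pos (fun x _ => mul_pos (hP x) (Real.exp_pos _)) Finset.univ_nonempty
  have key : ∀ x, ν x * F x - ν x * Real.log (ν x / P x) - ν x * Real.log Z
      ≤ P x * Real.exp (F x) / Z - ν x := by
    intro x
    rcases (hν x).eq_or_lt with h | h
    · rw [← h]; simp
      have := hP x
      positivity
    · have hpx := hP x
      have h1 := Real.log_le_sub_one_of_pos (show 0 < P x * Real.exp (F x) / Z / ν x by positivity)
      rw [Real.log_div (by positivity) (by positivity), Real.log_div (by positivity) (by positivity),
        Real.log_mul (by positivity) (by positivity), Real.log_exp] at h1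
      rw [Real.log_div (by positivity) (by positivity)]
      have h2 := mul_le_mul_of_nonneg_left h1 h.le
      have h3 : ν x * (P x * Real.exp (F x) / Z / ν x - 1) = P x * Real.exp (F x) / Z - ν x := by
        field_simp
      rw [h3] at h2
      linarith
  have hs := Finset.sum_le_sum fun x (_ : x ∈ Finset.univ) => key x
  rw [Finset.sum_sub_distrib, Finset.sum_sub_distrib, Finset.sum_sub_distrib, ← Finset.sum_mul, hν1,
    ← Finset.sum_div, ← hZ, div_self hZpos.ne'] at hs
  linarith

lemma prod_exp {n c : ℕ} (g φ : Fin n → Fin c → ℝ) :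
    ∑ x : Fin n → Fin c, (∏ j, g j (x j)) * ∏ j, φ j (x j) = ∏ j, ∑ s, g j s * φ j s := by
  rw [Finset.prod_univ_sum]
  simp [Fintype.piFinset_univ, Finset.prod_mul_distrib]

lemma prod_one {n c : ℕ} (g : Fin n → Fin c → ℝ) (hg : ∀ j, ∑ s, g j s = 1) :
    ∑ x : Fin n → Fin c, (∏ j, g j (x j)) = 1 := by
  have := prod_exp g (fun _ _ => 1)
  simpa [hg] using this

lemma prod_marg {n c : ℕ} (g : Fin n → Fin c → ℝ) (hg : ∀ j, ∑ s, g j s = 1) (i : Fin n)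
    (φ : Fin c → ℝ) :
    ∑ x : Fin n → Fin c, (∏ j, g j (x j)) * φ (x i) = ∑ s, g i s * φ s := by
  classical
  have h := prod_exp g (fun j s => if j = i then φ s else 1)
  have e1 : ∀ x : Fin n → Fin c, (∏ j, if j = i then φ (x j) else 1) = φ (x i) := by
    intro x; rw [Finset.prod_ite_eq' Finset.univ i (fun j => φ (x j))]; simp
  simp only [e1] at h
  rw [h, Finset.prod_eq_single i]
  · simp
  · intro j _ hj; simp [hj, hg]
  · simp

lemma prod_inj {n c v : ℕ} (g : Fin n → Fin c → ℝ) (hg : ∀ j, ∑ s, g j s = 1) (i : Fin v → Fin n)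
    (hi : Function.Injective i) (r : Fin c) :
    ∑ x : Fin n → Fin c, (∏ j, g j (x j)) * ∏ a, (if x (i a) = r then (1:ℝ) else 0)
      = ∏ a, g (i a) r := by
  classical
  have h := prod_exp g (fun j s => ∏ a ∈ Finset.univ.filter (fun a => i a = j), (if s = r then (1:ℝ) else 0))
  have e1 : ∀ x : Fin n → Fin c, (∏ j, ∏ a ∈ Finset.univ.filter (fun a => i a = j),
      (if x j = r then (1:ℝ) else 0)) = ∏ a, (if x (i a) = r then (1:ℝ) else 0) := fun x =>
    Finset.prod_fiberwise' Finset.univ i (fun j => if x j = r then (1:ℝ) else 0)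
  simp only [e1] at h
  rw [h, ← Finset.prod_fiberwise' Finset.univ i (fun j => g j r)]
  refine Finset.prod_congr rfl fun j _ => ?_
  have hc : (Finset.univ.filter (fun a => i a = j)).card ≤ 1 := by
    rw [Finset.card_le_one]
    intro a ha b hb
    simp only [Finset.mem_filter, Finset.mem_univ, true_and] at ha hb
    exact hi (ha.trans hb.symm)
  simp only [Finset.prod_const]
  interval_cases h : (Finset.univ.filter (fun a => i a = j)).card
  · simp [hg]
  · simp

lemma ent_prod {n c : ℕ} (m : Fin c → ℝ) (hm : ∀ r, 0 < m r) (g : Fin n → Fin c → ℝ)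
    (hg : ∀ j, ∑ s, g j s = 1) :
    ∑ x : Fin n → Fin c, (∏ j, g j (x j)) * Real.log ((∏ j, g j (x j)) / ∏ j, m (x j))
      = ∑ j, ent1 m (g j) := by
  have e : ∀ x : Fin n → Fin c, (∏ j, g j (x j)) * Real.log ((∏ j, g j (x j)) / ∏ j, m (x j))
      = ∑ i, (∏ j, g j (x j)) * Real.log (g i (x i) / m (x i)) := by
    intro x
    rw [← Finset.mul_sum]
    by_cases h0 : ∏ j, g j (x j) = 0
    · rw [h0]; simp
    · rw [← Finset.prod_div_distrib, Real.log_prod]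
      intro i hi
      have h0' := Finset.prod_ne_zero_iff.1 h0
      exact div_ne_zero (h0' i hi) (hm _).ne'
  simp_rw [e]
  rw [Finset.sum_comm]
  refine Finset.sum_congr rfl fun i _ => ?_
  exact prod_marg g hg i (fun s => Real.log (g i s / m s))

lemma Tn_avg {n c v : ℕ} (G : SimpleGraph (Fin v)) [DecidableRel G.Adj]
    (Q : Fin n → Fin n → ℝ) (g : Fin n → Fin c → ℝ) (hg : ∀ j, ∑ s, g j s = 1) :
    Tn c G n Q g = ∑ x : Fin n → Fin c, (∏ j, g j (x j)) *
      Tn c G n Q (fun i r => if x i = r then 1 else 0) := by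
  unfold Tn
  simp_rw [← mul_div_assoc, ← Finset.sum_div, Finset.mul_sum]
  rw [Finset.sum_comm]
  congr 1
  refine Finset.sum_congr rfl fun i hi => ?_
  have hinj : Function.Injective i := (Finset.mem_filter.1 hi).2
  simp_rw [← mul_assoc, ← Finset.sum_mul, Finset.mul_sum]
  congr 1
  rw [Finset.sum_comm]
  exact Finset.sum_congr rfl fun r _ => (prod_inj g hg i hinj r).symm

lemma lower_disc {n c v : ℕ} (hv : 0 < v) (G : SimpleGraph (Fin v)) [DecidableRel G.Adj]
    (Q : Fin n → Fin n → ℝ) (m : Fin c → ℝ) (hm : ∀ r, 0 < m r) (g : Fin n → Fin c → ℝ)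
    (hg0 : ∀ j s, 0 ≤ g j s) (hg : ∀ j, ∑ s, g j s = 1) (τ : ℝ) :
    τ * Tn c G n Q g - ∑ j, ent1 m (g j)
      ≤ Real.log (∑ x : Fin n → Fin c, (∏ j, m (x j)) *
        Real.exp (τ * Ustat G (monoPhi c v) n Q x)) := by
  have h := gibbs_lower (fun x : Fin n → Fin c => ∏ j, m (x j)) (fun x => ∏ j, g j (x j))
    (fun x => τ * Ustat G (monoPhi c v) n Q x) (fun x => Finset.prod_pos fun j _ => hm _)
    (fun x => Finset.prod_nonneg fun j _ => hg0 _ _) (prod_one g hg)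
  rw [ent_prod m hm g hg] at h
  refine le_trans (le_of_eq ?_) h
  congr 1
  simp_rw [Tn_ustat hv]
  rw [Tn_avg G Q g hg, Finset.mul_sum]
  exact Finset.sum_congr rfl fun x _ => by ring

/-- conditional one-site marginals -/
noncomputable def cmarg {n c : ℕ} (P : (Fin n → Fin c) → ℝ) (A : Finset (Fin n → Fin c))
    (i : Fin n) (r : Fin c) : ℝ := ∑ x ∈ A, (P x / ∑ y ∈ A, P y) * (if x i = r then 1 else 0)

lemma cmarg_sum {n c : ℕ} (P : (Fin n → Fin c) → ℝ) (A : Finset (Fin n → Fin c))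
    (hA : 0 < ∑ y ∈ A, P y) (i : Fin n) : ∑ r, cmarg P A i r = 1 := by
  unfold cmarg
  rw [Finset.sum_comm]
  simp_rw [← Finset.mul_sum]
  simp
  rw [← Finset.sum_div, div_self hA.ne']

lemma cmarg_nonneg {n c : ℕ} (P : (Fin n → Fin c) → ℝ) (hP : ∀ x, 0 < P x)
    (A : Finset (Fin n → Fin c)) (i : Fin n) (r : Fin c) : 0 ≤ cmarg P A i r := by
  refine Finset.sum_nonneg fun x _ => mul_nonneg (div_nonneg (hP x).le
    (Finset.sum_nonneg fun y _ => (hP y).le)) (by split_ifs <;> norm_num)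

lemma cmarg_ent {n c : ℕ} (m : Fin c → ℝ) (hm : ∀ r, 0 < m r) (A : Finset (Fin n → Fin c))
    (hA : A.Nonempty) :
    ∑ i, ent1 m (cmarg (fun x => ∏ j, m (x j)) A i) ≤ - Real.log (∑ x ∈ A, ∏ j, m (x j)) := by
  classical
  set P : (Fin n → Fin c) → ℝ := fun x => ∏ j, m (x j) with hPdef
  have hP : ∀ x, 0 < P x := fun x => Finset.prod_pos fun j _ => hm _
  set PA := ∑ x ∈ A, P x with hPA
  have hPApos : 0 < PA := Finset.sum_pos (fun x _ => hP x) hA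
  set g := cmarg P A with hg
  have hgpos : ∀ x ∈ A, ∀ i, 0 < g i (x i) := by
    intro x hx i
    refine Finset.sum_pos' (fun y _ => mul_nonneg (div_nonneg (hP y).le hPApos.le)
      (by split_ifs <;> norm_num)) ⟨x, hx, ?_⟩
    rw [if_pos rfl, mul_one]
    exact div_pos (hP x) hPApos
  have hg0 := cmarg_nonneg P hP A
  have hg1 := cmarg_sum P A hPApos
  have key : ∀ x ∈ A, (P x / PA) * (∑ i, Real.log (g i (x i) / m (x i)) + Real.log PA)
      ≤ (∏ i, g i (x i)) - P x / PA := by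
    intro x hx
    have hR : 0 < ∏ i, g i (x i) := Finset.prod_pos fun i _ => hgpos x hx i
    have hPx := hP x
    have h1 := Real.log_le_sub_one_of_pos (show 0 < (∏ i, g i (x i)) / P x * PA by positivity)
    rw [Real.log_mul (by positivity) hPApos.ne', hPdef, ← Finset.prod_div_distrib, Real.log_prod
      (fun i _ => (div_pos (hgpos x hx i) (hm _)).ne')] at h1
    rw [Finset.prod_div_distrib] at h1
    have h2 := mul_le_mul_of_nonneg_left h1 (div_pos hPx hPApos).le
    refine h2.trans (le_of_eq ?_)
    change P x / PA * ((∏ i, g i (x i)) / P x * PA - 1) = _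
    field_simp
  have hs := Finset.sum_le_sum key
  have hR1 : ∑ x ∈ A, ∏ i, g i (x i) ≤ 1 := by
    rw [← prod_one g hg1]
    exact Finset.sum_le_sum_of_subset_of_nonneg (Finset.subset_univ _)
      (fun x _ _ => Finset.prod_nonneg fun i _ => hg0 _ _)
  have hE : ∑ i, ent1 m (g i) = ∑ x ∈ A, (P x / PA) * ∑ i, Real.log (g i (x i) / m (x i)) := by
    simp_rw [Finset.mul_sum]
    rw [Finset.sum_comm]
    refine Finset.sum_congr rfl fun i _ => ?_
    unfold ent1
    calc ∑ r, g i r * Real.log (g i r / m r)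
        = ∑ r, ∑ x ∈ A, (P x / PA) * (if x i = r then Real.log (g i r / m r) else 0) := by
          refine Finset.sum_congr rfl fun r _ => ?_
          conv_lhs => rw [hg]; unfold cmarg
          rw [Finset.sum_mul]
          refine Finset.sum_congr rfl fun x _ => ?_
          rw [mul_assoc, ite_mul, one_mul, zero_mul]
          rfl
      _ = _ := by
          rw [Finset.sum_comm]
          refine Finset.sum_congr rfl fun x _ => ?_
          rw [← Finset.mul_sum]
          simp
  have hP1 : ∑ x ∈ A, P x / PA = 1 := by rw [← Finset.sum_div, div_self hPApos.ne']
  simp_rw [mul_add] at hs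
  rw [Finset.sum_add_distrib, ← hE, ← Finset.sum_mul, hP1, Finset.sum_sub_distrib, hP1] at hs
  linarith

end

section

lemma ae_Icc : ∀ᵐ x ∂unif01, x ∈ Icc (0:ℝ) 1 := ae_restrict_mem measurableSet_Icc

/-- the truncated colour densities -/
noncomputable def hof {c : ℕ} (f : ℝ → Fin c → ℝ) (r : Fin c) : ℝ → ℝ :=
  (Icc (0:ℝ) 1).indicator (fun u => f u r)

lemma hof_meas {c : ℕ} {f : ℝ → Fin c → ℝ} (hf : f ∈ Fc c) (r : Fin c) : Measurable (hof f r) :=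
  ((measurable_pi_apply r).comp hf.1).indicator measurableSet_Icc

lemma hof_nonneg {c : ℕ} {f : ℝ → Fin c → ℝ} (hf : f ∈ Fc c) (r : Fin c) (u : ℝ) : 0 ≤ hof f r u := by
  unfold hof
  exact indicator_nonneg (fun u hu => (hf.2.1 u hu r).1) u

lemma hof_le {c : ℕ} {f : ℝ → Fin c → ℝ} (hf : f ∈ Fc c) (r : Fin c) (u : ℝ) : hof f r u ≤ 1 := by
  unfold hof
  by_cases hu : u ∈ Icc (0:ℝ) 1
  · rw [indicator_of_mem hu]; exact (hf.2.1 u hu r).2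
  · rw [indicator_of_notMem hu]; norm_num

lemma hof_ae {c : ℕ} (f : ℝ → Fin c → ℝ) (r : Fin c) : ∀ᵐ u ∂unif01, hof f r u = f u r := by
  filter_upwards [ae_Icc] with u hu
  exact indicator_of_mem hu _

lemma hof_int {c : ℕ} {f : ℝ → Fin c → ℝ} (hf : f ∈ Fc c) (r : Fin c) : Integrable (hof f r) unif01 :=
  Integrable.of_bound (C := 1) (hof_meas hf r).aestronglyMeasurable (Eventually.of_forall fun u => by
    rw [Real.norm_eq_abs, abs_of_nonneg (hof_nonneg hf r u)]; exact hof_le hf r u)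

lemma G2_eq {v : ℕ} (c : ℕ) (G : SimpleGraph (Fin v)) [DecidableRel G.Adj]
    (W : ℝ → ℝ → ℝ) (f : ℝ → Fin c → ℝ) : G2 c G W f = ∑ r, tH G W (hof f r) := by
  unfold G2 tH
  refine Finset.sum_congr rfl fun r _ => integral_congr_ae ?_
  have : ∀ a : Fin v, ∀ᵐ x : Fin v → ℝ ∂(Measure.pi fun _ : Fin v => unif01), hof f r (x a) = f (x a) r :=
    fun a => (Measure.quasiMeasurePreserving_eval (fun _ : Fin v => unif01) a).ae (hof_ae f r)
  filter_upwards [ae_all_iff.2 this] with x hx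
  simp only [hx]

lemma phi_eq (m : ℝ) (hm : 0 < m) (t : ℝ) : t * Real.log (t / m) = t * Real.log t - t * Real.log m := by
  rcases eq_or_ne t 0 with h | h
  · simp [h]
  · rw [Real.log_div h hm.ne']; ring

lemma phi_cont (m : ℝ) (hm : 0 < m) : Continuous fun t : ℝ => t * Real.log (t / m) := by
  simp_rw [phi_eq m hm]
  exact Real.continuous_mul_log.sub (continuous_id.mul continuous_const)

lemma phi_conv (m : ℝ) (hm : 0 < m) : ConvexOn ℝ (Ici 0) fun t : ℝ => t * Real.log (t / m) := by
  simp_rw [phi_eq m hm]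
  refine Real.convexOn_mul_log.sub ?_
  exact ⟨convex_Ici 0, fun x _ y _ a b _ _ _ => by simp only [smul_eq_mul]; linarith⟩

lemma phi_bdd (m : ℝ) (hm : 0 < m) (t : ℝ) (h0 : 0 ≤ t) (h1 : t ≤ 1) :
    |t * Real.log (t / m)| ≤ 1 + |Real.log m| := by
  rw [phi_eq m hm]
  have e1 : |t * Real.log t| ≤ 1 := by
    rcases h0.eq_or_lt with h | h
    · rw [← h]; simp
    · rw [mul_comm]; exact (Real.abs_log_mul_self_lt t h h1).le
  have e2 : |t * Real.log m| ≤ |Real.log m| := by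
    rw [abs_mul, abs_of_nonneg h0]
    exact mul_le_of_le_one_left (abs_nonneg _) h1
  exact (abs_sub _ _).trans (add_le_add e1 e2)

lemma phi_hof_int {c : ℕ} {f : ℝ → Fin c → ℝ} (hf : f ∈ Fc c) (r : Fin c) (m : ℝ) (hm : 0 < m) :
    Integrable (fun u => hof f r u * Real.log (hof f r u / m)) unif01 :=
  Integrable.of_bound (C := 1 + |Real.log m|)
    ((phi_cont m hm).measurable.comp (hof_meas hf r)).aestronglyMeasurable
    (Eventually.of_forall fun u => phi_bdd m hm _ (hof_nonneg hf r u) (hof_le hf r u))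

lemma entPotts_eq {c : ℕ} (μ : Measure (Fin c)) {f : ℝ → Fin c → ℝ} (hf : f ∈ Fc c)
    (hm : ∀ r, 0 < (μ {r}).toReal) : entPotts c μ f
      = ∑ r, ∫ u, hof f r u * Real.log (hof f r u / (μ {r}).toReal) ∂unif01 := by
  unfold entPotts
  rw [← integral_finsetSum _ fun r _ => phi_hof_int hf r _ (hm r)]
  refine integral_congr_ae ?_
  filter_upwards [ae_all_iff.2 (hof_ae f)] with u hu
  simp only [hu]

lemma ent_jensen {c : ℕ} (μ : Measure (Fin c)) {f : ℝ → Fin c → ℝ} (hf : f ∈ Fc c)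
    (hm : ∀ r, 0 < (μ {r}).toReal) {n : ℕ} (hn : 0 < n) (ι : ℝ → Fin n) (hι : EqPart ι)
    (g : Fin n → Fin c → ℝ) (hg : ∀ i r, g i r = n * ∫ u in ι ⁻¹' {i}, hof f r u ∂unif01) :
    ∑ i, ent1 (fun r => (μ {r}).toReal) (g i) ≤ n * entPotts c μ f := by
  have hn0 : (0:ℝ) < n := by exact_mod_cast hn
  rw [entPotts_eq μ hf hm, Finset.mul_sum]
  unfold ent1
  rw [Finset.sum_comm]
  refine Finset.sum_le_sum fun r _ => ?_
  rw [int_decomp unif01 ι hι.1 _ (phi_hof_int hf r _ (hm r)), Finset.mul_sum]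
  refine Finset.sum_le_sum fun i _ => ?_
  have e1 : g i r = ∫ u, hof f r u ∂(cmeas unif01 ι n i) := by
    rw [hg, ← cavg_eq unif01 ι n hn0]; rfl
  have e2 : (n:ℝ) * ∫ u in ι ⁻¹' {i}, hof f r u * Real.log (hof f r u / (μ {r}).toReal) ∂unif01
      = ∫ u, hof f r u * Real.log (hof f r u / (μ {r}).toReal) ∂(cmeas unif01 ι n i) := by
    rw [← cavg_eq unif01 ι n hn0]; rfl
  rw [e2, e1]
  have := cmeas_prob unif01 ι n hn0 i (hι.2 i)
  have hinteg : ∀ F : ℝ → ℝ, Integrable F unif01 → Integrable F (cmeas unif01 ι n i) := fun F hF =>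
    hF.restrict.smul_measure ENNReal.ofReal_ne_top
  exact (phi_conv _ (hm r)).map_integral_le (phi_cont _ (hm r)).continuousOn isClosed_Ici
    (Eventually.of_forall fun u => hof_nonneg hf r u) (hinteg _ (hof_int hf r))
    (hinteg _ (phi_hof_int hf r _ (hm r)))

lemma gbar_simplex {c : ℕ} {f : ℝ → Fin c → ℝ} (hf : f ∈ Fc c)
    {n : ℕ} (hn : 0 < n) (ι : ℝ → Fin n) (hι : EqPart ι)
    (g : Fin n → Fin c → ℝ) (hg : ∀ i r, g i r = n * ∫ u in ι ⁻¹' {i}, hof f r u ∂unif01) :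
    (∀ i r, 0 ≤ g i r) ∧ ∀ i, ∑ r, g i r = 1 := by
  have hn0 : (0:ℝ) < n := by exact_mod_cast hn
  constructor
  · intro i r
    rw [hg]
    exact mul_nonneg hn0.le (integral_nonneg fun u => hof_nonneg hf r u)
  · intro i
    simp_rw [hg]
    rw [← Finset.mul_sum, ← integral_finsetSum _ fun r _ => (hof_int hf r).restrict]
    have : ∫ u in ι ⁻¹' {i}, ∑ r, hof f r u ∂unif01 = ∫ u in ι ⁻¹' {i}, 1 ∂unif01 := by
      refine integral_congr_ae (ae_restrict_of_ae ?_)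
      filter_upwards [ae_Icc, ae_all_iff.2 (hof_ae f)] with u hu hu2
      simp only [hu2]
      exact hf.2.2 u hu
    rw [this, setIntegral_const, hι.2 i]
    simp [hn0.ne']

lemma simplex_le {c : ℕ} (g : Fin c → ℝ) (h0 : ∀ r, 0 ≤ g r) (h1 : ∑ r, g r = 1) (r : Fin c) :
    g r ≤ 1 := h1 ▸ Finset.single_le_sum (fun s _ => h0 s) (Finset.mem_univ r)

lemma block_Fc {c n : ℕ} (ι : ℝ → Fin n) (hι : Measurable ι) (g : Fin n → Fin c → ℝ)
    (h0 : ∀ i r, 0 ≤ g i r) (h1 : ∀ i, ∑ r, g i r = 1) : (fun u => g (ι u)) ∈ Fc c :=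
  ⟨(measurable_of_countable g).comp hι, fun _ _ r => ⟨h0 _ r, simplex_le _ (h0 _) (h1 _) r⟩,
    fun _ _ => h1 _⟩

lemma block_ent {c n : ℕ} (μ : Measure (Fin c)) (ι : ℝ → Fin n) (hι : EqPart ι)
    (g : Fin n → Fin c → ℝ) : entPotts c μ (fun u => g (ι u))
      = (∑ i, ent1 (fun r => (μ {r}).toReal) (g i)) / n := by
  unfold entPotts
  change ∫ u, (fun i => ent1 (fun r => (μ {r}).toReal) (g i)) (ι u) ∂unif01 = _
  set F := (fun i => ent1 (fun r => (μ {r}).toReal) (g i))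
  have hi : Integrable (fun u => F (ι u)) unif01 :=
    Integrable.of_bound (C := ∑ i, |F i|) ((measurable_of_countable F).comp hι.1).aestronglyMeasurable
      (Eventually.of_forall fun u => Finset.single_le_sum (f := fun i => |F i|)
        (fun i _ => abs_nonneg _) (Finset.mem_univ _))
  rw [int_decomp unif01 ι hι.1 _ hi, Finset.sum_div]
  refine Finset.sum_congr rfl fun i _ => ?_
  rw [setIntegral_congr_fun (g := fun _ => F i) (hι.1 (measurableSet_singleton i))
    (fun u hu => by rw [show ι u = i from hu]), setIntegral_const, hι.2 i, smul_eq_mul]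
  ring

lemma block_avg {c n : ℕ} (hn : 0 < n) (ι : ℝ → Fin n) (hι : EqPart ι)
    (g : Fin n → Fin c → ℝ) (i : Fin n) (r : Fin c) :
    g i r = n * ∫ u in ι ⁻¹' {i}, g (ι u) r ∂unif01 := by
  have hn0 : (0:ℝ) < n := by exact_mod_cast hn
  rw [setIntegral_congr_fun (g := fun _ => g i r) (hι.1 (measurableSet_singleton i))
    (fun u hu => by simp only [show ι u = i from hu]), setIntegral_const, hι.2 i, smul_eq_mul]
  field_simp

lemma ent1_nonneg {c : ℕ} (m g : Fin c → ℝ) (hm : ∀ r, 0 < m r) (hm1 : ∑ r, m r = 1)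
    (h0 : ∀ r, 0 ≤ g r) (h1 : ∑ r, g r = 1) : 0 ≤ ent1 m g := by
  have h := gibbs_lower m g (fun _ => 0) hm h0 h1
  simp [hm1] at h
  exact h

lemma entPotts_nonneg {c : ℕ} (μ : Measure (Fin c)) {f : ℝ → Fin c → ℝ} (hf : f ∈ Fc c)
    (hm : ∀ r, 0 < (μ {r}).toReal) (hm1 : ∑ r, (μ {r}).toReal = 1) : 0 ≤ entPotts c μ f := by
  refine integral_nonneg_of_ae ?_
  filter_upwards [ae_Icc] with u hu
  exact ent1_nonneg (fun r => (μ {r}).toReal) (f u) hm hm1 (fun r => (hf.2.1 u hu r).1) (hf.2.2 u hu)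

lemma mu_sum {c : ℕ} (μ : Measure (Fin c)) [IsProbabilityMeasure μ] : ∑ r, (μ {r}).toReal = 1 := by
  have := sum_measureReal_singleton (μ := μ) Finset.univ
  simp only [measureReal_def] at this
  rw [this]; simp

lemma Zn_eq {c : ℕ} (μ : Measure (Fin c)) [IsProbabilityMeasure μ]
    (f : ∀ n : ℕ, (Fin n → Fin c) → ℝ) (n : ℕ) (θ : ℝ) :
    ZnGen μ f n θ = (n:ℝ)⁻¹ * Real.log (∑ x : Fin n → Fin c, (∏ j, (μ {x j}).toReal) *
      Real.exp (n * θ * f n x)) := by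
  unfold ZnGen
  congr 2
  rw [integral_fintype Integrable.of_finite]
  refine Finset.sum_congr rfl fun x _ => ?_
  rw [measureReal_def, Measure.pi_singleton, ENNReal.toReal_prod, smul_eq_mul]

end

section

/-- two kernels have close weighted homomorphism densities -/
def TClose {v : ℕ} (G : SimpleGraph (Fin v)) [DecidableRel G.Adj] (U V : ℝ → ℝ → ℝ) (ε : ℝ) : Prop :=
  ∀ h : ℝ → ℝ, Measurable h → (∀ u, 0 ≤ h u) → (∀ u, h u ≤ 1) → |tH G U h - tH G V h| ≤ ε

lemma TClose.sum {v c : ℕ} {G : SimpleGraph (Fin v)} [DecidableRel G.Adj] {U V : ℝ → ℝ → ℝ} {ε : ℝ}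
    (H : TClose G U V ε) (h : Fin c → ℝ → ℝ)
    (hh : ∀ r, Measurable (h r)) (h0 : ∀ r u, 0 ≤ h r u) (h1 : ∀ r u, h r u ≤ 1) :
    |∑ r, tH G U (h r) - ∑ r, tH G V (h r)| ≤ c * ε := by
  rw [← Finset.sum_sub_distrib]
  refine (Finset.abs_sum_le_sum_abs _ _).trans ?_
  refine (Finset.sum_le_sum fun r _ => H (h r) (hh r) (h0 r) (h1 r)).trans ?_
  simp

lemma Tn_near {v : ℕ} (c : ℕ) (G : SimpleGraph (Fin v)) [DecidableRel G.Adj] (n : ℕ) (hn : 0 < n)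
    (Q : Fin n → Fin n → ℝ) (ι : ℝ → Fin n) (hι : EqPart ι) (W : ℝ → ℝ → ℝ) (ε : ℝ)
    (hW : TClose G (fun x y => Q (ι x) (ι y)) W ε)
    (hnon : (∑ i ∈ Finset.univ.filter (fun i : Fin v → Fin n => ¬ Function.Injective i),
        |edgeProd G (fun a b => Q (i a) (i b))|) / (n:ℝ) ^ v ≤ ε)
    (h : Fin c → ℝ → ℝ)
    (hh : ∀ r, Measurable (h r)) (h0 : ∀ r u, 0 ≤ h r u) (h1 : ∀ r u, h r u ≤ 1)
    (g : Fin n → Fin c → ℝ) (hg : ∀ i r, g i r = n * ∫ u in ι ⁻¹' {i}, h r u ∂unif01) :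
    |Tn c G n Q g - ∑ r, tH G W (h r)| ≤ 2 * c * ε := by
  have e1 := (Tn_close c G n hn Q ι hι h hh h0 h1 g hg).trans
    (mul_le_mul_of_nonneg_left hnon (Nat.cast_nonneg c))
  have e2 := hW.sum h hh h0 h1
  rw [abs_le] at *
  constructor <;> linarith [e1.1, e1.2, e2.1, e2.2]

lemma mul_close {θ a b E : ℝ} (h : |a - b| ≤ E) : θ * a ≤ θ * b + |θ| * E := by
  have h1 : θ * (a - b) ≤ |θ| * E := by
    refine (le_abs_self _).trans ?_
    rw [abs_mul]
    exact mul_le_mul_of_nonneg_left h (abs_nonneg _)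
  linarith

lemma lower_n {v : ℕ} (hv : 0 < v) (c : ℕ) (G : SimpleGraph (Fin v)) [DecidableRel G.Adj]
    (μ : Measure (Fin c)) [IsProbabilityMeasure μ] (hm : ∀ r, 0 < (μ {r}).toReal)
    (Q : ∀ n, Fin n → Fin n → ℝ) (n : ℕ) (hn : 0 < n)
    (ι : ℝ → Fin n) (hι : EqPart ι) (W : ℝ → ℝ → ℝ) (ε : ℝ)
    (hW : TClose G (fun x y => Q n (ι x) (ι y)) W ε)
    (hnon : (∑ i ∈ Finset.univ.filter (fun i : Fin v → Fin n => ¬ Function.Injective i),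
        |edgeProd G (fun a b => Q n (i a) (i b))|) / (n:ℝ) ^ v ≤ ε) (θ : ℝ)
    (f : ℝ → Fin c → ℝ) (hf : f ∈ Fc c) :
    θ * G2 c G W f - entPotts c μ f ≤
      ZnGen μ (fun n => Ustat G (monoPhi c v) n (Q n)) n θ + |θ| * (2 * c * ε) := by
  have hn0 : (0:ℝ) < n := by exact_mod_cast hn
  set g : Fin n → Fin c → ℝ := fun i r => n * ∫ u in ι ⁻¹' {i}, hof f r u ∂unif01 with hg
  obtain ⟨hg0, hg1⟩ := gbar_simplex hf hn ι hι g (fun _ _ => rfl)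
  have hj := ent_jensen μ hf hm hn ι hι g (fun _ _ => rfl)
  have hl := lower_disc hv G (Q n) (fun r => (μ {r}).toReal) hm g hg0 hg1 (n * θ)
  have hc := Tn_near c G n hn (Q n) ι hι W ε hW hnon (hof f) (hof_meas hf) (hof_nonneg hf)
    (hof_le hf) g (fun _ _ => rfl)
  rw [← G2_eq, abs_sub_comm] at hc
  have hc' := mul_close (θ := θ) hc
  rw [Zn_eq]
  set L := Real.log (∑ x : Fin n → Fin c, (∏ j, (μ {x j}).toReal) *
      Real.exp (n * θ * Ustat G (monoPhi c v) n (Q n) x)) with hL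
  have h1 : n * (θ * Tn c G n (Q n) g - entPotts c μ f) ≤ L := by
    calc _ = n * θ * Tn c G n (Q n) g - n * entPotts c μ f := by ring
      _ ≤ _ := by linarith
  have h2 : θ * Tn c G n (Q n) g - entPotts c μ f ≤ (n:ℝ)⁻¹ * L := by
    rw [inv_mul_eq_div, le_div_iff₀ hn0]; linarith
  linarith

/-- block polynomial -/
noncomputable def Psi {v m c : ℕ} (G : SimpleGraph (Fin v)) [DecidableRel G.Adj] (w : Fin m → Fin m → ℝ)
    (M : Fin m → Fin c → ℝ) : ℝ :=
  ∑ r, ∑ i : Fin v → Fin m, edgeProd G (fun a b => w (i a) (i b)) * ∏ a, M (i a) r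

lemma Psi_cont {v m c : ℕ} (G : SimpleGraph (Fin v)) [DecidableRel G.Adj] (w : Fin m → Fin m → ℝ) :
    Continuous (Psi (c := c) G w) := by
  unfold Psi
  fun_prop

lemma Psi_cover {v m c : ℕ} (G : SimpleGraph (Fin v)) [DecidableRel G.Adj] (w : Fin m → Fin m → ℝ)
    (ε : ℝ) (hε : 0 < ε) : ∃ t : Finset (Fin m → Fin c → ℝ), ∃ δ > 0,
      (∀ M ∈ Icc (0 : Fin m → Fin c → ℝ) 1, ∃ y ∈ t, M ∈ Metric.ball y δ) ∧
      ∀ y : Fin m → Fin c → ℝ, ∀ M ∈ Metric.ball y δ ∩ Icc 0 1, ∀ M' ∈ Metric.ball y δ ∩ Icc 0 1,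
        |Psi G w M - Psi G w M'| ≤ ε := by
  have hK : IsCompact (Icc (0 : Fin m → Fin c → ℝ) 1) := isCompact_Icc
  have hu := hK.uniformContinuousOn_of_continuous (Psi_cont G w).continuousOn
  rw [Metric.uniformContinuousOn_iff] at hu
  obtain ⟨δ, hδ, hu⟩ := hu ε hε
  obtain ⟨t, _, ht, hcov⟩ := hK.finite_cover_balls (half_pos hδ)
  refine ⟨ht.toFinset, δ / 2, half_pos hδ, ?_, ?_⟩
  · intro M hM
    have := hcov hM
    simp only [mem_iUnion] at this
    obtain ⟨y, hy, h⟩ := this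
    exact ⟨y, by simpa using hy, h⟩
  · intro y M hM M' hM'
    refine (hu M hM.2 M' hM'.2 ?_).le
    have h1 := hM.1
    have h2 := hM'.1
    rw [Metric.mem_ball] at h1 h2
    rw [dist_comm] at h2
    linarith [dist_triangle M y M']

/-- block masses -/
noncomputable def Mass {n m c : ℕ} (ι : ℝ → Fin n) (κ : ℝ → Fin m) (g : Fin n → Fin c → ℝ) :
    Fin m → Fin c → ℝ := fun k r => ∫ u in κ ⁻¹' {k}, g (ι u) r ∂unif01

lemma gi_meas {n c : ℕ} (ι : ℝ → Fin n) (hι : Measurable ι) (g : Fin n → Fin c → ℝ) (r : Fin c) :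
    Measurable fun u => g (ι u) r := (measurable_of_countable fun i => g i r).comp hι

lemma gi_int {n c : ℕ} (ι : ℝ → Fin n) (hι : Measurable ι) (g : Fin n → Fin c → ℝ) (r : Fin c) :
    Integrable (fun u => g (ι u) r) unif01 :=
  Integrable.of_bound (C := ∑ i, |g i r|) (gi_meas ι hι g r).aestronglyMeasurable
      (Eventually.of_forall fun u => Finset.single_le_sum (f := fun i => |g i r|)
        (fun i _ => abs_nonneg _) (Finset.mem_univ _))

lemma Mass_mem {n m c : ℕ} (ι : ℝ → Fin n) (hι : Measurable ι) (κ : ℝ → Fin m)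
    (g : Fin n → Fin c → ℝ) (h0 : ∀ i r, 0 ≤ g i r) (h1 : ∀ i r, g i r ≤ 1) :
    Mass ι κ g ∈ Icc (0 : Fin m → Fin c → ℝ) 1 := by
  constructor
  · intro k r
    exact integral_nonneg fun u => h0 _ _
  · intro k r
    calc Mass ι κ g k r ≤ ∫ u, g (ι u) r ∂unif01 :=
          setIntegral_le_integral (gi_int ι hι g r) (Eventually.of_forall fun u => h0 _ _)
      _ ≤ ∫ u, 1 ∂unif01 := integral_mono (gi_int ι hι g r) (integrable_const _) fun u => h1 _ _
      _ = 1 := by simp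

lemma Psi_Mass {v n m c : ℕ} (G : SimpleGraph (Fin v)) [DecidableRel G.Adj] (w : Fin m → Fin m → ℝ)
    (ι : ℝ → Fin n) (hι : Measurable ι) (κ : ℝ → Fin m) (hκ : Measurable κ)
    (g : Fin n → Fin c → ℝ) (h0 : ∀ i r, 0 ≤ g i r) (h1 : ∀ i r, g i r ≤ 1) :
    ∑ r, tH G (fun x y => w (κ x) (κ y)) (fun u => g (ι u) r) = Psi G w (Mass ι κ g) := by
  unfold Psi Mass
  exact Finset.sum_congr rfl fun r _ => tH_block G w κ hκ _ (gi_meas ι hι g r) (fun _ => h0 _ _)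
    (fun _ => h1 _ _)

/-- the colour indicator of a configuration -/
noncomputable def ind {n c : ℕ} (x : Fin n → Fin c) : Fin n → Fin c → ℝ :=
  fun i r => if x i = r then 1 else 0

lemma ind_nonneg {n c : ℕ} (x : Fin n → Fin c) (i : Fin n) (r : Fin c) : 0 ≤ ind x i r := by
  unfold ind; split_ifs <;> norm_num

lemma ind_le {n c : ℕ} (x : Fin n → Fin c) (i : Fin n) (r : Fin c) : ind x i r ≤ 1 := by
  unfold ind; split_ifs <;> norm_num

lemma Mass_cmarg {n m c : ℕ} (ι : ℝ → Fin n) (hι : Measurable ι) (κ : ℝ → Fin m)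
    (P : (Fin n → Fin c) → ℝ) (A : Finset (Fin n → Fin c)) :
    Mass ι κ (cmarg P A) = ∑ x ∈ A, (P x / ∑ y ∈ A, P y) • Mass ι κ (ind x) := by
  funext k r
  simp only [Finset.sum_apply, Pi.smul_apply, smul_eq_mul]
  unfold Mass cmarg
  rw [integral_finsetSum]
  · exact Finset.sum_congr rfl fun x _ => integral_const_mul _ _
  · intro x _
    exact ((gi_int ι hι (ind x) r).const_mul _).restrict

lemma upper_n {v : ℕ} (hv : 0 < v) (c : ℕ) (G : SimpleGraph (Fin v)) [DecidableRel G.Adj]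
    (μ : Measure (Fin c)) [IsProbabilityMeasure μ] (hm : ∀ r, 0 < (μ {r}).toReal)
    (Q : ∀ n, Fin n → Fin n → ℝ) (n : ℕ) (hn : 0 < n)
    (ι : ℝ → Fin n) (hι : EqPart ι) (W : ℝ → ℝ → ℝ) (ε : ℝ)
    (hW : TClose G (fun x y => Q n (ι x) (ι y)) W ε)
    (hnon : (∑ i ∈ Finset.univ.filter (fun i : Fin v → Fin n => ¬ Function.Injective i),
        |edgeProd G (fun a b => Q n (i a) (i b))|) / (n:ℝ) ^ v ≤ ε) (θ : ℝ)
    {m : ℕ} (w : Fin m → Fin m → ℝ) (κ : ℝ → Fin m) (hκ : Measurable κ)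
    (hWw : TClose G W (fun x y => w (κ x) (κ y)) ε)
    (t : Finset (Fin m → Fin c → ℝ)) (δ : ℝ)
    (hcov : ∀ M ∈ Icc (0 : Fin m → Fin c → ℝ) 1, ∃ y ∈ t, M ∈ Metric.ball y δ)
    (hosc : ∀ y : Fin m → Fin c → ℝ, ∀ M ∈ Metric.ball y δ ∩ Icc 0 1, ∀ M' ∈ Metric.ball y δ ∩ Icc 0 1,
        |Psi G w M - Psi G w M'| ≤ ε)
    (Z : ℝ) (hZ : ∀ f ∈ Fc c, θ * G2 c G W f - entPotts c μ f ≤ Z) :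
    ZnGen μ (fun n => Ustat G (monoPhi c v) n (Q n)) n θ
      ≤ Z + |θ| * ((4 * c + 1) * ε) + Real.log t.card / n := by
  classical
  have hn0 : (0:ℝ) < n := by exact_mod_cast hn
  set P : (Fin n → Fin c) → ℝ := fun x => ∏ j, (μ {x j}).toReal with hP
  have hPpos : ∀ x, 0 < P x := fun x => Finset.prod_pos fun j _ => hm _
  set F : (Fin n → Fin c) → ℝ := fun x => P x * Real.exp (n * θ * Ustat G (monoPhi c v) n (Q n) x)
    with hF
  set E : ℝ := (4 * c + 1) * ε with hE
  have hMx : ∀ x : Fin n → Fin c, Mass ι κ (ind x) ∈ Icc (0 : Fin m → Fin c → ℝ) 1 := fun x =>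
    Mass_mem ι hι.1 κ _ (ind_nonneg x) (ind_le x)
  choose yc hyc hyb using fun x : Fin n → Fin c => hcov _ (hMx x)
  have hclass : ∀ y ∈ t, ∑ x ∈ Finset.univ.filter (fun x => yc x = y), F x
      ≤ Real.exp (n * (Z + |θ| * E)) := by
    intro y _
    set A := Finset.univ.filter (fun x => yc x = y) with hA
    rcases A.eq_empty_or_nonempty with hAe | hAne
    · rw [hAe, Finset.sum_empty]; exact (Real.exp_pos _).le
    have hPA : 0 < ∑ x ∈ A, P x := Finset.sum_pos (fun x _ => hPpos x) hAne
    set g := cmarg P A with hg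
    have hg0 := cmarg_nonneg P hPpos A
    have hg1 := cmarg_sum P A hPA
    have hgle : ∀ i r, g i r ≤ 1 := fun i r => simplex_le _ (hg0 i) (hg1 i) r
    have hfc := block_Fc ι hι.1 g hg0 hg1
    have hent := cmarg_ent (n := n) (fun r => (μ {r}).toReal) hm A hAne
    have hentf := block_ent μ ι hι g
    have hMA : ∀ x ∈ A, Mass ι κ (ind x) ∈ Metric.ball y δ ∩ Icc 0 1 := by
      intro x hx
      have : yc x = y := (Finset.mem_filter.1 hx).2
      exact ⟨this ▸ hyb x, hMx x⟩
    have hMg : Mass ι κ g ∈ Metric.ball y δ ∩ Icc 0 1 := by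
      rw [hg, Mass_cmarg ι hι.1 κ]
      refine ((convex_ball y δ).inter (convex_Icc 0 1)).sum_mem
        (fun x _ => div_nonneg (hPpos x).le hPA.le) ?_ hMA
      rw [← Finset.sum_div, div_self hPA.ne']
    have hU : ∀ x ∈ A, |Ustat G (monoPhi c v) n (Q n) x - G2 c G W (fun u => g (ι u))| ≤ E := by
      intro x hx
      have e1 := Tn_near c G n hn (Q n) ι hι W ε hW hnon (fun r u => ind x (ι u) r)
        (gi_meas ι hι.1 (ind x)) (fun _ _ => ind_nonneg _ _ _) (fun _ _ => ind_le _ _ _) (ind x)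
        (block_avg hn ι hι (ind x))
      have e2 := hWw.sum (fun r u => ind x (ι u) r)
        (gi_meas ι hι.1 (ind x)) (fun _ _ => ind_nonneg _ _ _) (fun _ _ => ind_le _ _ _)
      have e3 := hosc y _ (hMA x hx) _ hMg
      have e4 := hWw.sum (fun r u => g (ι u) r)
        (gi_meas ι hι.1 g) (fun _ _ => hg0 _ _) (fun _ _ => hgle _ _)
      rw [Psi_Mass G w ι hι.1 κ hκ (ind x) (ind_nonneg x) (ind_le x)] at e2
      rw [Psi_Mass G w ι hι.1 κ hκ g hg0 hgle] at e4
      rw [show G2 c G W (fun u => g (ι u)) = ∑ r, tH G W (fun u => g (ι u) r) from rfl,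
        Tn_ustat hv]
      change |Tn c G n (Q n) (ind x) - _| ≤ E
      have hcε : (0:ℝ) ≤ c * ε := (abs_nonneg _).trans e2
      rw [abs_le] at *
      constructor <;> linarith [e1.1, e1.2, e2.1, e2.2, e3.1, e3.2, e4.1, e4.2]
    have hZf := hZ _ hfc
    have hPAle : ∑ x ∈ A, P x ≤ Real.exp (- (n * entPotts c μ (fun u => g (ι u)))) := by
      rw [← Real.log_le_iff_le_exp hPA, hentf, mul_div_cancel₀ _ hn0.ne']
      linarith
    calc ∑ x ∈ A, F x ≤ ∑ x ∈ A, P x * Real.exp (n * (θ * G2 c G W (fun u => g (ι u)) + |θ| * E)) := by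
          refine Finset.sum_le_sum fun x hx => ?_
          refine mul_le_mul_of_nonneg_left (Real.exp_le_exp.2 ?_) (hPpos x).le
          rw [mul_assoc]
          exact mul_le_mul_of_nonneg_left (mul_close (hU x hx)) hn0.le
      _ = (∑ x ∈ A, P x) * Real.exp (n * (θ * G2 c G W (fun u => g (ι u)) + |θ| * E)) := by
          rw [Finset.sum_mul]
      _ ≤ Real.exp (- (n * entPotts c μ (fun u => g (ι u)))) *
          Real.exp (n * (θ * G2 c G W (fun u => g (ι u)) + |θ| * E)) :=
          mul_le_mul_of_nonneg_right hPAle (Real.exp_pos _).le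
      _ ≤ _ := by
          rw [← Real.exp_add, Real.exp_le_exp]
          have := mul_le_mul_of_nonneg_left hZf hn0.le
          linarith
  have htot : ∑ x, F x ≤ t.card * Real.exp (n * (Z + |θ| * E)) := by
    rw [← Finset.sum_fiberwise_of_maps_to (g := yc) (t := t) (fun x _ => hyc x)]
    refine (Finset.sum_le_sum hclass).trans ?_
    simp
  rw [Zn_eq]
  change (n:ℝ)⁻¹ * Real.log (∑ x, F x) ≤ _
  have hne : (Finset.univ : Finset (Fin n → Fin c)).Nonempty := by
    by_contra h
    rw [Finset.not_nonempty_iff_eq_empty] at h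
    have h2 := prod_one (n := n) (fun _ r => (μ {r}).toReal) (fun _ => mu_sum μ)
    rw [h] at h2
    simp at h2
  have hpos : 0 < ∑ x, F x := Finset.sum_pos (fun x _ => mul_pos (hPpos x) (Real.exp_pos _)) hne
  have htc : (0:ℝ) < t.card := by
    obtain ⟨x, _⟩ := hne
    exact_mod_cast Finset.card_pos.2 ⟨_, hyc x⟩
  have hlog := Real.log_le_log hpos htot
  rw [Real.log_mul htc.ne' (Real.exp_pos _).ne', Real.log_exp] at hlog
  rw [inv_mul_le_iff₀ hn0]
  refine hlog.trans (le_of_eq ?_)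
  field_simp
  ring

end

section

lemma Fc_nonempty {c : ℕ} (μ : Measure (Fin c)) [IsProbabilityMeasure μ] :
    (fun (_ : ℝ) (r : Fin c) => (μ {r}).toReal) ∈ Fc c :=
  ⟨measurable_const, fun _ _ r => ⟨ENNReal.toReal_nonneg,
    simplex_le _ (fun _ => ENNReal.toReal_nonneg) (mu_sum μ) r⟩, fun _ _ => mu_sum μ⟩

lemma Zset_bdd {v : ℕ} (c : ℕ) (G : SimpleGraph (Fin v)) [DecidableRel G.Adj]
    (D : ℕ) (hD : 1 ≤ D) (hG : G.maxDegree ≤ D) (q : ℝ) (hq : 1 < q)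
    (μ : Measure (Fin c)) [IsProbabilityMeasure μ] (hm : ∀ r, 0 < (μ {r}).toReal)
    (W : ℝ → ℝ → ℝ) (hW : Measurable (Function.uncurry W))
    (hWC : kerNorm W (ENNReal.ofReal (q * D)) ≠ ⊤) (θ : ℝ) :
    BddAbove {z : ℝ | ∃ f ∈ Fc c, z = θ * G2 c G W f - entPotts c μ f} := by
  obtain ⟨B, hB⟩ := tH_bound G D hD hG q hq W hW hWC
  refine ⟨|θ| * (c * B), ?_⟩
  rintro z ⟨f, hf, rfl⟩
  have h1 := entPotts_nonneg μ hf hm (mu_sum μ)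
  have h2 : |G2 c G W f - 0| ≤ c * B := by
    rw [sub_zero, G2_eq]
    refine (Finset.abs_sum_le_sum_abs _ _).trans ?_
    refine (Finset.sum_le_sum fun r _ => hB _ (hof_nonneg hf r) (hof_le hf r)).trans ?_
    simp
  have h3 := mul_close (θ := θ) h2
  linarith

lemma core {v : ℕ} (hv : 0 < v) (c : ℕ) (G : SimpleGraph (Fin v)) [DecidableRel G.Adj]
    (D : ℕ) (hD : 1 ≤ D) (hG : G.maxDegree ≤ D) (q : ℝ) (hq : 1 < q)
    (C : ℝ≥0∞) (hC : C ≠ ⊤)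
    (μ : Measure (Fin c)) [IsProbabilityMeasure μ] (hm : ∀ r, 0 < (μ {r}).toReal)
    (Q : ∀ n, Fin n → Fin n → ℝ) (W : ℝ → ℝ → ℝ) (hW : Measurable (Function.uncurry W))
    (hWi : Integrable (Function.uncurry W) (unif01.prod unif01))
    (ι : ∀ n, ℝ → Fin (n + 1)) (hι : ∀ n, EqPart (ι n))
    (hk : ∀ᶠ n in atTop, kerNorm (fun x y => Q (n + 1) (ι n x) (ι n y)) (ENNReal.ofReal (q * D)) ≤ C)
    (η : ℕ → ℝ) (hη : Tendsto η atTop (nhds 0))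
    (hcut : ∀ n, CutLe (fun z => Q (n + 1) (ι n z.1) (ι n z.2) - W z.1 z.2) (η n)) (θ : ℝ) :
    Tendsto (fun n => ZnGen μ (fun n => Ustat G (monoPhi c v) n (Q n)) n θ) atTop
      (nhds (sSup {z : ℝ | ∃ f ∈ Fc c, z = θ * G2 c G W f - entPotts c μ f})) := by
  have hD1 : (1:ℝ) ≤ D := by exact_mod_cast hD
  have hp1 : 1 ≤ ENNReal.ofReal (q * D) := by
    rw [← ENNReal.ofReal_one]
    exact ENNReal.ofReal_le_ofReal (by nlinarith)
  obtain ⟨hWC, happ⟩ := W_approx (fun n x y => Q (n + 1) (ι n x) (ι n y))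
    (fun n => int_Q _ _ (hι n).1) W hW hWi _ hp1 ENNReal.ofReal_ne_top C hk η hη hcut
  have hbdd := Zset_bdd c G D hD hG q hq μ hm W hW (ne_top_of_le_ne_top hC hWC) θ
  set S := {z : ℝ | ∃ f ∈ Fc c, z = θ * G2 c G W f - entPotts c μ f} with hS
  have hSne : S.Nonempty := ⟨_, _, Fc_nonempty μ, rfl⟩
  rw [← tendsto_add_atTop_iff_nat 1, Metric.tendsto_nhds]
  intro ε hε
  set ε1 : ℝ := ε / (3 * (|θ| + 1) * (4 * c + 1)) with hε1
  have hth := abs_nonneg θ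
  have hεpos : 0 < ε1 := by positivity
  have hθ : |θ| * ((4 * c + 1) * ε1) ≤ ε / 3 := by
    have : |θ| * ((4 * c + 1) * ε1) = ε / 3 * (|θ| / (|θ| + 1)) := by
      rw [hε1]; field_simp
    rw [this]
    refine mul_le_of_le_one_right (by positivity) ?_
    rw [div_le_one (by positivity)]; linarith
  have hθ2 : |θ| * (2 * c * ε1) ≤ ε / 3 := by
    refine le_trans (mul_le_mul_of_nonneg_left ?_ hth) hθ
    have : (0:ℝ) ≤ c := Nat.cast_nonneg c
    nlinarith
  obtain ⟨η0, hη0, hcount⟩ := counting G D hD hG q hq C hC ε1 hεpos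
  obtain ⟨m, hmz, w, hwC, hwcut⟩ := happ η0 hη0
  obtain ⟨t, δ, hδ, hcov, hosc⟩ := Psi_cover (c := c) G w ε1 hεpos
  have hWw : TClose G W (fun x y => w (idx m x) (idx m y)) ε1 :=
    hcount W _ hW (meas_Q w (idx m) (idx_meas m)) hWC hwC hwcut
  have hsmall := (tendsto_add_atTop_nat 1).eventually (noninj_small G D hD hG q hq C hC ε1 hεpos)
  have hlog : Tendsto (fun n : ℕ => Real.log t.card / ((n + 1 : ℕ) : ℝ)) atTop (nhds 0) :=
    (tendsto_const_div_atTop_nhds_zero_nat (Real.log t.card)).comp (tendsto_add_atTop_nat 1)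
  filter_upwards [hk, hsmall, hη.eventually (gt_mem_nhds hη0),
    hlog.eventually (gt_mem_nhds (show (0:ℝ) < ε / 3 by positivity))] with n hkn hsn hηn hln
  have hnon := hsn (Q (n + 1)) (ι n) (hι n) hkn
  have hTC : TClose G (fun x y => Q (n + 1) (ι n x) (ι n y)) W ε1 :=
    hcount _ W (meas_Q _ _ (hι n).1) hW hkn hWC
      (fun A B hA hB => (hcut n A B hA hB).trans hηn.le)
  have hlow : sSup S ≤ ZnGen μ (fun n => Ustat G (monoPhi c v) n (Q n)) (n + 1) θ
      + |θ| * (2 * c * ε1) := by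
    refine csSup_le hSne ?_
    rintro z ⟨f, hf, rfl⟩
    exact lower_n hv c G μ hm Q (n + 1) (Nat.succ_pos n) (ι n) (hι n) W ε1 hTC hnon θ f hf
  have hup := upper_n hv c G μ hm Q (n + 1) (Nat.succ_pos n) (ι n) (hι n) W ε1 hTC hnon θ w (idx m)
    (idx_meas m) hWw t δ hcov hosc (sSup S) (fun f hf => le_csSup hbdd ⟨f, hf, rfl⟩)
  rw [Real.dist_eq, abs_lt]
  constructor <;> linarith

lemma core_weak {v : ℕ} (hv : 0 < v) (c : ℕ) (G : SimpleGraph (Fin v)) [DecidableRel G.Adj]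
    (D : ℕ) (hD : 1 ≤ D) (hG : G.maxDegree ≤ D) (q : ℝ) (hq : 1 < q)
    (μ : Measure (Fin c)) [IsProbabilityMeasure μ] (hm : ∀ r, 0 < (μ {r}).toReal)
    (Q : ∀ n, Fin n → Fin n → ℝ) (W : ℝ → ℝ → ℝ) (hW : Measurable (Function.uncurry W))
    (hWi : Integrable (Function.uncurry W) (unif01.prod unif01))
    (hcut : Tendsto (fun n => weakCutDist (stepKernel n (Q n)) W) atTop (nhds 0))
    (hnorm : Filter.atTop.limsup
        (fun n => kerNorm (stepKernel n (Q n)) (ENNReal.ofReal (q * D))) ≠ ⊤) (θ : ℝ) :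
    Tendsto (fun n => ZnGen μ (fun n => Ustat G (monoPhi c v) n (Q n)) n θ) atTop
      (nhds (sSup {z : ℝ | ∃ f ∈ Fc c, z = θ * G2 c G W f - entPotts c μ f})) := by
  choose ι hι hkι hcι using fun n : ℕ => exists_part (n + 1) (Q (n + 1)) W hWi (1 / ((n:ℝ) + 1))
    (by positivity)
  have hlt : Filter.atTop.limsup
        (fun n => kerNorm (stepKernel n (Q n)) (ENNReal.ofReal (q * D))) < ⊤ := hnorm.lt_top
  obtain ⟨C, hC1, hC2⟩ := exists_between hlt
  have hev := Filter.eventually_lt_of_limsup_lt hC1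
  refine core hv c G D hD hG q hq C hC2.ne μ hm Q W hW hWi ι hι ?_ _ ?_ hcι θ
  · filter_upwards [(tendsto_add_atTop_nat 1).eventually hev] with n hn
    rw [hkι]
    exact hn.le
  · have := (hcut.comp (tendsto_add_atTop_nat 1)).add tendsto_one_div_add_atTop_nhds_zero_nat
    simpa using this

lemma edgeProd_zero {v : ℕ} (G : SimpleGraph (Fin v)) [DecidableRel G.Adj] (h : G.maxDegree = 0)
    (f : Fin v → Fin v → ℝ) : edgeProd G f = 1 := by
  unfold edgeProd
  refine Finset.prod_eq_one fun p hp => ?_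
  exfalso
  have hp' := (Finset.mem_filter.1 hp).2.1
  have h1 := G.degree_le_maxDegree p.1
  have h2 : 0 < G.degree p.1 := (G.degree_pos_iff_exists_adj p.1).2 ⟨_, hp'⟩
  omega

lemma main_aux
    (c : ℕ) (μ : Measure (Fin c)) [IsProbabilityMeasure μ]
    (hpos : ∀ r : Fin c, 0 < μ {r})
    {v : ℕ} (hv : 2 ≤ v) (G : SimpleGraph (Fin v)) [DecidableRel G.Adj]
    (Q : ∀ n : ℕ, Fin n → Fin n → ℝ)
    (W : ℝ → ℝ → ℝ) (hWmeas : Measurable (Function.uncurry W))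
    (hWL1 : kerNorm W 1 ≠ ⊤)
    (hcut : Tendsto (fun n => weakCutDist (stepKernel n (Q n)) W) atTop (nhds 0))
    (q : ℝ≥0∞) (hq : 1 < q)
    (hnorm : Filter.atTop.limsup
        (fun n => kerNorm (stepKernel n (Q n)) (q * (G.maxDegree : ℝ≥0∞))) ≠ ⊤)
    (θ : ℝ) :
    Tendsto (fun n => ZnGen μ (fun n => Ustat G (monoPhi c v) n (Q n)) n θ) atTop
      (nhds (sSup {z : ℝ | ∃ f ∈ Fc c, z = θ * G2 c G W f - entPotts c μ f})) := by
  have hm : ∀ r, 0 < (μ {r}).toReal := fun r =>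
    ENNReal.toReal_pos (hpos r).ne' (measure_ne_top _ _)
  have hv0 : 0 < v := by omega
  rcases Nat.eq_zero_or_pos G.maxDegree with h0 | hD
  · have e1 : (fun n => ZnGen μ (fun n => Ustat G (monoPhi c v) n (Q n)) n θ)
        = fun n => ZnGen μ (fun n => Ustat G (monoPhi c v) n ((fun _ _ _ => 0 : ∀ n, Fin n → Fin n → ℝ) n)) n θ := by
      funext n
      unfold ZnGen Ustat
      simp only [edgeProd_zero G h0]
    have e2 : ∀ f, G2 c G W f = G2 c G (fun _ _ => 0) f := by
      intro f
      unfold G2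
      simp only [edgeProd_zero G h0]
    simp only [e2]
    rw [e1]
    refine core hv0 c G 1 le_rfl (by omega) 2 (by norm_num) 0 (by simp) μ hm _ (fun _ _ => 0)
      measurable_const (integrable_zero _ _ _) (fun n => idx (n + 1)) (fun n => idx_eqPart (n + 1))
      (Eventually.of_forall fun n => ?_) (fun _ => 0) tendsto_const_nhds (fun n A B _ _ => ?_) θ
    · unfold kerNorm; simp
    · simp
  · have hWi : Integrable (Function.uncurry W) (unif01.prod unif01) :=
      integrable_of_kerNorm W hWmeas 1 le_rfl hWL1
    have hD0 : (0:ℝ) < G.maxDegree := by exact_mod_cast hD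
    by_cases hqt : q = ⊤
    · refine core_weak hv0 c G G.maxDegree hD le_rfl 2 (by norm_num) μ hm Q W hWmeas hWi hcut ?_ θ
      refine ne_top_of_le_ne_top hnorm ?_
      refine Filter.limsup_le_limsup ?_
      filter_upwards [eventually_gt_atTop 0] with n hn
      have : NeZero n := ⟨hn.ne'⟩
      rw [hqt, ENNReal.top_mul (by exact_mod_cast hD.ne')]
      unfold kerNorm
      refine eLpNorm_le_eLpNorm_of_exponent_le le_top ?_
      unfold stepKernel
      refine Measurable.aestronglyMeasurable ?_
      refine Finset.measurable_sum _ fun i _ => Finset.measurable_sum _ fun j _ => ?_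
      refine Measurable.ite ?_ measurable_const measurable_const
      exact (measurable_fst measurableSet_Ioc).inter (measurable_snd measurableSet_Ioc)
    · have hq1 : 1 < q.toReal := by
        rw [← ENNReal.toReal_one]
        exact (ENNReal.toReal_lt_toReal ENNReal.one_ne_top hqt).2 hq
      refine core_weak hv0 c G G.maxDegree hD le_rfl q.toReal hq1 μ hm Q W hWmeas hWi hcut ?_ θ
      rw [ENNReal.ofReal_mul ENNReal.toReal_nonneg, ENNReal.ofReal_toReal hqt, ENNReal.ofReal_natCast]
      exact hnorm

end

/-- Theorem 1.4 (i): limit of the Potts log-normalizing constant. -/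
theorem potts_gibbs_log_partition_limit
    (c : ℕ) (μ : Measure (Fin c)) [IsProbabilityMeasure μ]
    (hpos : ∀ r : Fin c, 0 < μ {r})
    {v : ℕ} (hv : 2 ≤ v) (G : SimpleGraph (Fin v)) [DecidableRel G.Adj]
    (Q : ∀ n : ℕ, Fin n → Fin n → ℝ)
    (hQsymm : ∀ n i j, Q n i j = Q n j i) (hQzero : ∀ n i, Q n i i = 0)
    (W : ℝ → ℝ → ℝ) (hWmeas : Measurable (Function.uncurry W))
    (hWsymm : ∀ x y, W x y = W y x) (hWL1 : kerNorm W 1 ≠ ⊤)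
    (hcut : Tendsto (fun n => weakCutDist (stepKernel n (Q n)) W) atTop (nhds 0))
    (q : ℝ≥0∞) (hq : 1 < q)
    (hnorm : Filter.atTop.limsup
        (fun n => kerNorm (stepKernel n (Q n)) (q * (G.maxDegree : ℝ≥0∞))) ≠ ⊤)
    (θ : ℝ) :
    Tendsto (fun n => ZnGen μ (fun n => Ustat G (monoPhi c v) n (Q n)) n θ) atTop
      (nhds (sSup {z : ℝ | ∃ f ∈ Fc c, z = θ * G2 c G W f - entPotts c μ f})) := by
  exact main_aux c μ hpos hv G Q W hWmeas hWL1 hcut q hq hnorm θ
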